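/- Let s ≥ 1 and t ≥ 5 be integers and set n = 2(2^s − 1) + 2^s(2^t − 1) = 2^{s+t} + 2^s − 2. Consider the Kameko surjection Sq^0 : Q_n → Q_{(n−4)/2} = Q_{2^{s+t−1} + 2^{s−1} − 3}. Then the subspace of GL_4(F_2)-invariant elements of the kernel of this map is trivial if s ∈ {1, 2} and is one-dimensional if s ≥ 3. -/

import Mathlib

/-!
Common setup: the polynomial algebra `P_4 = F_2[x_1,x_2,x_3,x_4]` (variables `X 0, ..., X 3`),
the Steenrod action, hit polynomials, the cohit spaces `Q_n`, and the (induced) actions of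
`GL_4(F_2)` and of the symmetric group `Σ_4` on `Q_n`.
-/

open MvPolynomial

noncomputable section

abbrev kk : Type := ZMod 2
abbrev P4 : Type := MvPolynomial (Fin 4) kk

/-- The total Steenrod square: the algebra endomorphism of `P4` with `X i ↦ X i + (X i)^2`.
For `g` homogeneous of degree `d`, `Sq^t g` is the degree-`d+t` homogeneous component
of `sqTotal g`. -/
def sqTotal : P4 →ₐ[kk] P4 := aeval fun i => X i + X i ^ 2

/-- The homogeneous polynomials of degree `n`, i.e. `(P_4)_n`, as a submodule. -/
def homog (n : ℕ) : Submodule kk P4 := homogeneousSubmodule (Fin 4) kk n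

/-- The subspace `H_n` of hit polynomials of degree `n`: it is spanned by the elements
`Sq^{n-d}(g) = (sqTotal g)_n` for `g` homogeneous of degree `d < n`, i.e. by all
`∑_{t>0} Sq^t(f_t)` with `f_t ∈ (P_4)_{n-t}`. -/
def hitSub (n : ℕ) : Submodule kk P4 :=
  Submodule.span kk
    {p | ∃ d, d < n ∧ ∃ g ∈ homog d, p = homogeneousComponent n (sqTotal g)}

/-- The cohit space `Q_n = (P_4)_n / H_n`. -/
abbrev Qn (n : ℕ) :=
  ↥(homog n) ⧸ ((hitSub n).comap (homog n).subtype)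

/-- Projection of a polynomial onto its degree-`n` part, landing in `homog n`. -/
def toHomog (n : ℕ) : P4 →ₗ[kk] homog n :=
  (homogeneousComponent n).codRestrict (homog n) fun f => homogeneousComponent_mem n f

/-- The class in `Q_n` of (the degree-`n` component of) a polynomial.  For `f`
homogeneous of degree `n` this is the class `[f]` of `f`. -/
def Qmk (n : ℕ) : P4 →ₗ[kk] Qn n :=
  ((hitSub n).comap (homog n).subtype).mkQ.comp (toHomog n)

/-- Substitution action of a matrix `M`: the algebra endomorphism `X i ↦ ∑ j M i j • X j`. -/
def substM (M : Matrix (Fin 4) (Fin 4) kk) : P4 →ₐ[kk] P4 :=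
  aeval fun i => ∑ j, M i j • X j

/-- The set of invertible `4 × 4` matrices over `F_2`, i.e. `GL_4(F_2)`. -/
def glSet : Set (Matrix (Fin 4) (Fin 4) kk) := {M | IsUnit M}

/-- The set of permutation matrices, i.e. `Σ_4 ⊆ GL_4(F_2)`. -/
def permSet : Set (Matrix (Fin 4) (Fin 4) kk) :=
  {M | ∃ σ : Equiv.Perm (Fin 4), M = σ.toPEquiv.toMatrix}

/-- Homogeneous polynomials of degree `n` whose class in `Q_n` is invariant under every
element of `G` (the action on classes being induced by `substM`): for every `M ∈ G`,
`M·f - f` is hit. -/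
def invPre (n : ℕ) (G : Set (Matrix (Fin 4) (Fin 4) kk)) : Submodule kk P4 :=
  homog n ⊓ ⨅ M ∈ G, (hitSub n).comap ((substM M).toLinearMap - LinearMap.id)

/-- The subspace `(Q_n)^G` of `G`-invariant classes in `Q_n`. -/
def QInv (n : ℕ) (G : Set (Matrix (Fin 4) (Fin 4) kk)) : Submodule kk (Qn n) :=
  (invPre n G).map (Qmk n)

/-- The `Σ_4`-submodule of `Q_n` generated by the classes of the polynomials in `S`:
the span of the classes of all the permuted polynomials `σ · f`, `σ ∈ Σ_4`, `f ∈ S`. -/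
def permSpan (n : ℕ) (S : Set P4) : Submodule kk (Qn n) :=
  Submodule.span kk
    {c | ∃ σ : Equiv.Perm (Fin 4), ∃ f ∈ S, c = Qmk n (rename (⇑σ) f)}

/-- Halve an exponent vector with all entries odd: `a ↦ (a-1)/2` entrywise. -/
def halfExp (d : Fin 4 →₀ ℕ) : Fin 4 →₀ ℕ :=
  d.mapRange (fun a => (a - 1) / 2) (by decide)

open scoped Classical in
/-- The down Kameko map `(P_4)_{2m+4} → (P_4)_m`: the linear map sending a monomial
`f` to `g` if `f = x₁x₂x₃x₄ · g²` (i.e. all exponents of `f` are odd) and to `0` otherwise. -/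
def kameko : P4 →ₗ[kk] P4 :=
  (basisMonomials (Fin 4) kk).constr kk fun d =>
    if ∀ i, d i % 2 = 1 then monomial (halfExp d) 1 else 0

/-- The kernel of the Kameko squaring operation `Sq^0 : Q_{2m+4} → Q_m` induced by
`kameko`: the image in `Q_{2m+4}` of the homogeneous polynomials of degree `2m+4`
whose Kameko image has zero class in `Q_m`. -/
def kamekoKer (m : ℕ) : Submodule kk (Qn (2 * m + 4)) :=
  (homog (2 * m + 4) ⊓ (LinearMap.ker (Qmk m)).comap kameko).map (Qmk (2 * m + 4))



theorem two0 : (2 : P4) = 0 := CharP.cast_eq_zero P4 2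

def sqT : P4 →ₐ[kk] Polynomial P4 :=
  aeval fun i => Polynomial.C (X i) + Polynomial.X * Polynomial.C (X i ^ 2)

def Sq (k : ℕ) : P4 →ₗ[kk] P4 :=
  ((Polynomial.lcoeff P4 k).restrictScalars kk) ∘ₗ sqT.toLinearMap

theorem Sq_apply (k : ℕ) (f : P4) : Sq k f = (sqT f).coeff k := rfl

def Lin (a : P4) : Prop := sqT a = Polynomial.C a + Polynomial.X * Polynomial.C (a ^ 2)

theorem Lin_X (i : Fin 4) : Lin (X i) := by simp [Lin, sqT]
theorem Lin_zero : Lin 0 := by simp [Lin]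
theorem Lin_add {a b : P4} (ha : Lin a) (hb : Lin b) : Lin (a + b) := by
  unfold Lin at *
  rw [map_add, ha, hb, CharTwo.add_sq]; simp only [map_add]; ring
theorem Lin_smul (c : kk) {a : P4} (ha : Lin a) : Lin (c • a) := by
  rcases (by revert c; decide : c = 0 ∨ c = 1) with rfl | rfl
  · simpa using Lin_zero
  · simpa using ha
theorem Lin_sum {ι : Type*} (s : Finset ι) (f : ι → P4) (h : ∀ i ∈ s, Lin (f i)) :
    Lin (∑ i ∈ s, f i) := by
  classical
  induction s using Finset.induction_on with
  | empty => simpa using Lin_zero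
  | insert i s hi ih =>
    rw [Finset.sum_insert hi]
    exact Lin_add (h _ (by simp)) (ih fun j hj => h j (by simp [hj]))

def lf (α : Fin 4 → kk) : P4 := ∑ i, α i • X i
theorem Lin_lf (α : Fin 4 → kk) : Lin (lf α) := Lin_sum _ _ fun i _ => Lin_smul _ (Lin_X i)

theorem Sq_zero (f : P4) : Sq 0 f = f := by
  have : ((Polynomial.aeval (0:P4)).restrictScalars kk).comp sqT = AlgHom.id kk P4 := by
    apply MvPolynomial.algHom_ext
    intro i
    simp [sqT]
  have := DFunLike.congr_fun this f
  simpa [Sq_apply, Polynomial.coeff_zero_eq_aeval_zero] using this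

theorem Sq_lin {a : P4} (ha : Lin a) (k : ℕ) (f : P4) :
    Sq (k+1) (a * f) = a * Sq (k+1) f + a^2 * Sq k f := by
  rw [Sq_apply, map_mul, ha, add_mul, mul_assoc, Polynomial.coeff_add, Polynomial.coeff_C_mul,
    Polynomial.coeff_X_mul, Polynomial.coeff_C_mul]
  rfl

theorem Sq_sq (k : ℕ) (f : P4) : Sq (2*k) (f^2) = (Sq k f)^2 := by
  rw [Sq_apply, Sq_apply, map_pow, ← Polynomial.map_frobenius_expand]
  simp [mul_comm 2 k, frobenius_def]

theorem Sq_sq_odd (k : ℕ) (f : P4) : Sq (2*k+1) (f^2) = 0 := by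
  rw [Sq_apply, map_pow, ← Polynomial.map_frobenius_expand]
  rw [Polynomial.coeff_map, Polynomial.coeff_expand (by norm_num), if_neg (by omega), map_zero]

theorem Sq1_sq (f : P4) : Sq 1 (f^2) = 0 := Sq_sq_odd 0 f
theorem Sq2_sq (f : P4) : Sq 2 (f^2) = (Sq 1 f)^2 := Sq_sq 1 f
theorem Sq3_sq (f : P4) : Sq 3 (f^2) = 0 := Sq_sq_odd 1 f
theorem Sq4_sq (f : P4) : Sq 4 (f^2) = (Sq 2 f)^2 := Sq_sq 2 f
theorem Sq_lin1 {a : P4} (ha : Lin a) (f : P4) : Sq 1 (a * f) = a * Sq 1 f + a^2 * f := by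
  simpa [Sq_zero] using Sq_lin ha 0 f
theorem Sq_lin2 {a : P4} (ha : Lin a) (f : P4) : Sq 2 (a * f) = a * Sq 2 f + a^2 * Sq 1 f := 
  Sq_lin ha 1 f
theorem Sq_lin3 {a : P4} (ha : Lin a) (f : P4) : Sq 3 (a * f) = a * Sq 3 f + a^2 * Sq 2 f := 
  Sq_lin ha 2 f
theorem Sq_lin4 {a : P4} (ha : Lin a) (f : P4) : Sq 4 (a * f) = a * Sq 4 f + a^2 * Sq 3 f := 
  Sq_lin ha 3 f

def H : Submodule kk P4 := Submodule.span kk {p | ∃ k g, 0 < k ∧ p = Sq k g}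

theorem Sq_mem {k : ℕ} (hk : 0 < k) (g : P4) : Sq k g ∈ H :=
  Submodule.subset_span ⟨k, g, hk, rfl⟩

/-- the quotient map -/
def q : P4 →ₗ[kk] P4 ⧸ H := H.mkQ
theorem q_eq0 {f : P4} : q f = 0 ↔ f ∈ H := by simp [q]
theorem q_eq {f g : P4} : q f = q g ↔ f - g ∈ H := by
  rw [← q_eq0, map_sub, sub_eq_zero]
theorem q_self (x : P4 ⧸ H) : x + x = 0 := by
  have : (2:kk) • x = 0 := by rw [show (2:kk)=0 from rfl, zero_smul]
  rwa [two_smul] at this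
theorem q_add0 {x y : P4 ⧸ H} : x + y = 0 ↔ x = y := by
  constructor
  · intro h
    calc x = x + (y + y) := by rw [q_self, add_zero]
      _ = y := by rw [← add_assoc, h, zero_add]
  · rintro rfl; exact q_self _

variable {a b c : P4}

theorem sq_mem (ha : Lin a) (g : P4) : a^2 * g^2 ∈ H := by
  have := Sq_mem one_pos (a * g^2)
  rwa [Sq_lin1 ha, Sq1_sq, mul_zero, zero_add] at this

theorem q_sq (ha : Lin a) (g : P4) : q (a^2 * g^2) = 0 := q_eq0.2 (sq_mem ha g)

theorem M1 (ha : Lin a) (hb : Lin b) (g : P4) : q (a * (b * g)^2) = q (b * (a * g)^2) := by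
  rw [← q_add0, ← map_add, q_eq0]
  have := Sq_mem one_pos (a * (b * g^2))
  rw [Sq_lin1 ha, Sq_lin1 hb, Sq1_sq] at this
  convert this using 1; ring

theorem R1 (ha : Lin a) (hb : Lin b) (hc : Lin c) (g : P4) :
    q (a * b * (c * g)^2) + q (a * c * (b * g)^2) + q (b * c * (a * g)^2) = 0 := by
  rw [← map_add, ← map_add, q_eq0]
  have := Sq_mem one_pos (a * (b * (c * g^2)))
  rw [Sq_lin1 ha, Sq_lin1 hb, Sq_lin1 hc, Sq1_sq] at this
  convert this using 1; ring

theorem H_ind {P : P4 → Prop} (h0 : P 0) (hadd : ∀ x y, P x → P y → P (x + y))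
    (hS : ∀ k g, P (Sq (k+1) g)) {f : P4} (hf : f ∈ H) : P f := by
  induction hf using Submodule.span_induction with
  | mem x hx =>
    obtain ⟨k, g, hk, rfl⟩ := hx
    obtain ⟨k, rfl⟩ := Nat.exists_eq_add_of_lt hk
    simpa using hS k g
  | zero => exact h0
  | add x y _ _ h1 h2 => exact hadd x y h1 h2
  | smul c x _ h =>
    rcases (by revert c; decide : c = 0 ∨ c = 1) with rfl | rfl
    · simpa using h0
    · simpa using h

theorem R0a (ha : Lin a) {h : P4} (hh : h ∈ H) : a * h^2 ∈ H := by
  refine H_ind (P := fun h => a * h^2 ∈ H) (by simp) ?_ ?_ hh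
  · intro x y hx hy; rw [CharTwo.add_sq, mul_add]; exact add_mem hx hy
  · intro k g
    have := Sq_mem (Nat.succ_pos _) (k := 2*k+1+1) (a * g^2)
    rw [Sq_lin ha, Sq_sq_odd] at this
    rw [← Sq_sq]
    rw [mul_zero, add_zero] at this
    exact this

theorem R0 (ha : Lin a) (hb : Lin b) {h : P4} (hh : h ∈ H) : a * b * h^2 ∈ H := by
  refine H_ind (P := fun h => a * b * h^2 ∈ H) (by simp) ?_ ?_ hh
  · intro x y hx hy; rw [CharTwo.add_sq, mul_add]; exact add_mem hx hy
  · intro k g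
    have := Sq_mem (Nat.succ_pos _) (k := 2*k+1+1) (a * (b * g^2))
    rw [Sq_lin ha, Sq_lin hb, Sq_lin hb, Sq_sq_odd, show 2*k+1+1 = 2*(k+1) by ring, Sq_sq, Sq_sq] at this
    have h2 := sq_mem ha (b * Sq k g)
    convert sub_mem this h2 using 1
    ring

/-- congruence versions -/
theorem q_congr1 (ha : Lin a) {f g : P4} (h : q f = q g) : q (a * f^2) = q (a * g^2) := by
  rw [q_eq] at *
  have := R0a ha h
  rwa [CharTwo.sub_eq_add, CharTwo.add_sq, mul_add, ← CharTwo.sub_eq_add] at this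
theorem q_congr2 (ha : Lin a) (hb : Lin b) {f g : P4} (h : q f = q g) :
    q (a * b * f^2) = q (a * b * g^2) := by
  rw [q_eq] at *
  have := R0 ha hb h
  rwa [CharTwo.sub_eq_add, CharTwo.add_sq, mul_add, ← CharTwo.sub_eq_add] at this

/-- Sq2 (abc g²) -/
theorem S2 (ha : Lin a) (hb : Lin b) (hc : Lin c) (g : P4) :
    q (a * b * c * (Sq 1 g)^2) + q (a * (b * c * g)^2) + q (b * (a * c * g)^2)
      + q (c * (a * b * g)^2) = 0 := by
  simp only [← map_add]; rw [q_eq0]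
  have := Sq_mem two_pos (a * (b * (c * g^2)))
  rw [Sq_lin2 ha, Sq_lin2 hb, Sq_lin2 hc, Sq_lin1 hb, Sq_lin1 hc, Sq1_sq, Sq2_sq] at this
  convert this using 1; ring

theorem Sq_C (k : ℕ) (r : kk) : Sq (k+1) (C r) = 0 := by
  have : (C r : P4) = algebraMap kk P4 r := rfl
  rw [Sq_apply, this, AlgHom.commutes, Polynomial.algebraMap_apply, Polynomial.coeff_C]
  simp

theorem Sq1_Sq1 (f : P4) : Sq 1 (Sq 1 f) = 0 := by
  induction f using MvPolynomial.induction_on with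
  | C r => rw [Sq_C 0, map_zero]
  | add p q hp hq => rw [map_add, map_add, hp, hq, add_zero]
  | mul_X p i hp =>
    rw [mul_comm, Sq_lin1 (Lin_X i), map_add, pow_two, mul_assoc, Sq_lin1 (Lin_X i),
      Sq_lin1 (Lin_X i), Sq_lin1 (Lin_X i), hp]
    linear_combination (X i ^ 2 * Sq 1 p + X i ^ 3 * p) * two0

theorem S4 {d : P4} (ha : Lin a) (hb : Lin b) (hc : Lin c) (hd : Lin d) (k : ℕ) (h : P4) :
    q (a * b * c * d * (Sq (k+1) h)^2) =
      q (a * b * (c * d * Sq k h)^2) + q (a * c * (b * d * Sq k h)^2)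
      + q (a * d * (b * c * Sq k h)^2) + q (b * c * (a * d * Sq k h)^2)
      + q (b * d * (a * c * Sq k h)^2) + q (c * d * (a * b * Sq k h)^2) := by
  rw [← q_add0]; simp only [← map_add]; rw [q_eq0]
  rcases k with _ | k
  · have := Sq_mem two_pos (a * (b * (c * (d * h^2))))
    simp only [Sq_lin2 ha, Sq_lin2 hb, Sq_lin2 hc, Sq_lin2 hd, Sq_lin1 hb, Sq_lin1 hc,
      Sq_lin1 hd, Sq1_sq, Sq2_sq] at this
    simp only [zero_add, Sq_zero]
    convert this using 1; ring
  · have e4 : Sq (2*k+4) (h^2) = (Sq (k+1+1) h)^2 := Sq_sq (k+2) h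
    have e3 : Sq (2*k+3) (h^2) = 0 := Sq_sq_odd (k+1) h
    have e2 : Sq (2*k+2) (h^2) = (Sq (k+1) h)^2 := Sq_sq (k+1) h
    have e1 : Sq (2*k+1) (h^2) = 0 := Sq_sq_odd k h
    have e0 : Sq (2*k) (h^2) = (Sq k h)^2 := Sq_sq k h
    have l4 : ∀ {a : P4} (_ : Lin a) (f : P4), Sq (2*k+4) (a*f) = a * Sq (2*k+4) f + a^2 * Sq (2*k+3) f :=
      fun ha f => Sq_lin ha (2*k+3) f
    have l3 : ∀ {a : P4} (_ : Lin a) (f : P4), Sq (2*k+3) (a*f) = a * Sq (2*k+3) f + a^2 * Sq (2*k+2) f :=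
      fun ha f => Sq_lin ha (2*k+2) f
    have l2 : ∀ {a : P4} (_ : Lin a) (f : P4), Sq (2*k+2) (a*f) = a * Sq (2*k+2) f + a^2 * Sq (2*k+1) f :=
      fun ha f => Sq_lin ha (2*k+1) f
    have l1 : ∀ {a : P4} (_ : Lin a) (f : P4), Sq (2*k+1) (a*f) = a * Sq (2*k+1) f + a^2 * Sq (2*k) f :=
      fun ha f => Sq_lin ha (2*k) f
    have := Sq_mem (Nat.succ_pos _) (k := 2*k+4) (a * (b * (c * (d * h^2))))
    simp only [l4 ha, l4 hb, l4 hc, l4 hd, l3 hb, l3 hc, l3 hd, l2 hc, l2 hd, l1 hd,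
      e0, e1, e2, e3, e4] at this
    have h2 := sq_mem ha (b * c * d * Sq k h)
    convert sub_mem this h2 using 1; ring

theorem R2 {d h1 h2 p : P4} (ha : Lin a) (hb : Lin b) (hc : Lin c) (hd : Lin d) 
    (h0 : Sq 1 h1 + Sq 2 h2 = 0) (hp : p = h1 + Sq 1 h2) :
      q (a * b * (c * d * p)^2) + q (a * c * (b * d * p)^2)
      + q (a * d * (b * c * p)^2) + q (b * c * (a * d * p)^2)
      + q (b * d * (a * c * p)^2) + q (c * d * (a * b * p)^2) = 0 := by
  have e1 := S4 ha hb hc hd 0 h1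
  have e2 := S4 ha hb hc hd 1 h2
  have e3 : Sq (0+1) h1 = Sq (1+1) h2 := by
    rw [← CharTwo.sub_eq_add, sub_eq_zero] at h0; exact h0
  rw [e3, Sq_zero] at e1
  rw [e1] at e2
  rw [← q_add0] at e2
  rw [← e2, hp]
  simp only [mul_add, CharTwo.add_sq, map_add]
  abel

/-! monomials -/
def mon (c : Fin 4 → ℕ) : P4 := ∏ i, X i ^ c i
def ee (i : Fin 4) : Fin 4 → ℕ := Pi.single i 1
theorem mon_zero : mon 0 = 1 := by simp [mon]
theorem mon_add (c d : Fin 4 → ℕ) : mon (c + d) = mon c * mon d := by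
  simp [mon, pow_add, Finset.prod_mul_distrib]
theorem mon_ee (i : Fin 4) : mon (ee i) = X i := by
  simp [mon, ee, Pi.single_apply, Finset.prod_ite_eq']
theorem mon_two (c : Fin 4 → ℕ) : mon (2 • c) = mon c ^ 2 := by
  rw [two_nsmul, mon_add, pow_two]
theorem mon_eq (u : Fin 4 →₀ ℕ) : monomial u (1:kk) = mon u := by
  rw [monomial_eq, Finsupp.prod_fintype _ _ (by simp)]; simp [mon]
def dg (c : Fin 4 → ℕ) : ℕ := ∑ i, c i
theorem dg_add (c d : Fin 4 → ℕ) : dg (c + d) = dg c + dg d := by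
  simp [dg, Finset.sum_add_distrib]
theorem dg_ee (i : Fin 4) : dg (ee i) = 1 := by simp [dg, ee]
theorem dg_two (c : Fin 4 → ℕ) : dg (2 • c) = 2 * dg c := by rw [two_nsmul, dg_add]; ring
theorem mon_homog (c : Fin 4 → ℕ) : mon c ∈ homog (dg c) := by
  rw [homog, mem_homogeneousSubmodule, mon, dg]
  exact IsHomogeneous.prod _ _ _ fun i _ => by simpa using (isHomogeneous_X kk i).pow (c i)
theorem homog_mul {m n : ℕ} {f g : P4} (hf : f ∈ homog m) (hg : g ∈ homog n) :
    f * g ∈ homog (m + n) := IsHomogeneous.mul hf hg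
theorem X_homog (i : Fin 4) : (X i : P4) ∈ homog 1 := isHomogeneous_X kk i
theorem homog_sq {n : ℕ} {f : P4} (hf : f ∈ homog n) : f^2 ∈ homog (2*n) := by
  rw [pow_two, two_mul]; exact homog_mul hf hf
theorem homog_span (n : ℕ) : homog n = Submodule.span kk {p | ∃ c, dg c = n ∧ p = mon c} := by
  apply le_antisymm
  · intro f hf
    rw [← support_sum_monomial_coeff f]
    refine Submodule.sum_mem _ fun u hu => ?_
    rw [← mul_one (coeff u f), ← smul_eq_mul, ← smul_monomial, mon_eq]
    refine Submodule.smul_mem _ _ (Submodule.subset_span ⟨u, ?_, rfl⟩)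
    have := hf (mem_support_iff.1 hu)
    rw [← this, Finsupp.weight_apply, Finsupp.sum_fintype _ _ (by simp)]; simp [dg]
  · rw [Submodule.span_le]; rintro _ ⟨c, rfl, rfl⟩; exact mon_homog c

theorem exp_cases (c : Fin 4 → ℕ) : c = 0 ∨ ∃ i d, c = ee i + d := by
  by_cases h : c = 0
  · exact Or.inl h
  · right
    obtain ⟨i, hi⟩ := Function.ne_iff.1 h
    refine ⟨i, c - ee i, ?_⟩
    ext j
    simp only [Pi.add_apply, Pi.sub_apply, ee, Pi.single_apply]
    split_ifs with hj
    · subst hj; simp at hi; omega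
    · omega

theorem Sq_mon_homog : ∀ (n : ℕ) (c : Fin 4 → ℕ) (k : ℕ), dg c = n → Sq k (mon c) ∈ homog (n + k) := by
  intro n
  induction n with
  | zero =>
    intro c k h
    rcases exp_cases c with rfl | ⟨i, d, rfl⟩
    · rcases k with _ | k
      · rw [Sq_zero]; exact h ▸ mon_homog 0
      · rw [mon_zero, ← C_1, Sq_C]; exact zero_mem _
    · rw [dg_add, dg_ee] at h; omega
  | succ n ih =>
    intro c k h
    rcases exp_cases c with rfl | ⟨i, d, rfl⟩
    · simp [dg] at h
    · have hd : dg d = n := by rw [dg_add, dg_ee] at h; omega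
      rcases k with _ | k
      · rw [Sq_zero, ← h]; exact mon_homog _
      · rw [mon_add, mon_ee, Sq_lin (Lin_X i)]
        refine add_mem ?_ ?_
        · have := homog_mul (X_homog i) (ih d (k+1) hd)
          rwa [show 1 + (n + (k+1)) = n + 1 + (k+1) by ring] at this
        · have := homog_mul (homog_sq (X_homog i)) (ih d k hd)
          rwa [show 2*1 + (n + k) = n + 1 + (k+1) by ring] at this

theorem Sq_homog {n : ℕ} (k : ℕ) {f : P4} (hf : f ∈ homog n) : Sq k f ∈ homog (n + k) := by
  rw [homog_span] at hf
  have : Submodule.span kk {p | ∃ c, dg c = n ∧ p = mon c} ≤ (homog (n+k)).comap (Sq k) := by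
    rw [Submodule.span_le]; rintro _ ⟨c, h, rfl⟩; exact Sq_mon_homog n c k h
  exact this hf

theorem sqTotal_eq (f : P4) : sqTotal f = (sqT f).eval 1 := by
  have : ((Polynomial.aeval (1:P4)).restrictScalars kk).comp sqT = sqTotal := by
    apply MvPolynomial.algHom_ext
    intro i
    simp [sqT, sqTotal]
  have := DFunLike.congr_fun this f
  simpa [Polynomial.coe_aeval_eq_eval] using this.symm

theorem comp_sqTotal {n : ℕ} (k : ℕ) {f : P4} (hf : f ∈ homog n) :
    homogeneousComponent (n + k) (sqTotal f) = Sq k f := by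
  rw [sqTotal_eq, Polynomial.eval_eq_sum, Polynomial.sum, map_sum]
  simp only [one_pow, mul_one]
  have key : ∀ j, homogeneousComponent (n+k) ((sqT f).coeff j) = if j = k then Sq k f else 0 := by
    intro j
    rw [← Sq_apply, homogeneousComponent_of_mem (Sq_homog j hf)]
    by_cases h : j = k
    · subst h; simp
    · rw [if_neg h, if_neg (by omega)]
  simp only [key]
  rw [Finset.sum_ite_eq']
  split_ifs with h
  · rfl
  · rw [Polynomial.notMem_support_iff] at h; rw [Sq_apply, h]

theorem comp_sqTotal_lt {n j : ℕ} (hj : j < n) {f : P4} (hf : f ∈ homog n) :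
    homogeneousComponent j (sqTotal f) = 0 := by
  rw [sqTotal_eq, Polynomial.eval_eq_sum, Polynomial.sum, map_sum]
  apply Finset.sum_eq_zero
  intro i _
  rw [one_pow, mul_one, ← Sq_apply, homogeneousComponent_of_mem (Sq_homog i hf), if_neg (by omega)]

theorem hitSub_le (n : ℕ) : hitSub n ≤ H := by
  rw [hitSub, Submodule.span_le]
  rintro _ ⟨d, hd, g, hg, rfl⟩
  obtain ⟨k, rfl⟩ := Nat.exists_eq_add_of_lt hd
  rw [add_assoc, comp_sqTotal (k+1) hg]
  exact Sq_mem (Nat.succ_pos _) _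

theorem comp_H (n : ℕ) {f : P4} (hf : f ∈ H) : homogeneousComponent n f ∈ hitSub n := by
  refine H_ind (P := fun f => homogeneousComponent n f ∈ hitSub n) (by simp) ?_ ?_ hf
  · intro x y hx hy; rw [map_add]; exact add_mem hx hy
  · intro k g
    rw [← sum_homogeneousComponent g, map_sum, map_sum]
    refine Submodule.sum_mem _ fun i _ => ?_
    have hi : homogeneousComponent i g ∈ homog i := homogeneousComponent_mem i g
    rw [homogeneousComponent_of_mem (Sq_homog (k+1) hi)]
    split_ifs with h
    · subst h
      rw [← comp_sqTotal _ hi]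
      exact Submodule.subset_span ⟨i, by omega, _, hi, rfl⟩
    · exact zero_mem _

theorem mem_hitSub {n : ℕ} {f : P4} (hf : f ∈ homog n) : f ∈ hitSub n ↔ f ∈ H := by
  refine ⟨fun h => hitSub_le n h, fun h => ?_⟩
  have := comp_H n h
  rwa [homogeneousComponent_of_mem hf, if_pos rfl] at this

theorem substM_lf (M : Matrix (Fin 4) (Fin 4) kk) (i : Fin 4) : substM M (X i) = lf (M i) := by
  simp [substM, lf]

theorem substM_Sq (M : Matrix (Fin 4) (Fin 4) kk) (k : ℕ) (f : P4) :
    substM M (Sq k f) = Sq k (substM M f) := by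
  have : ((Polynomial.mapAlgHom (substM M))).comp sqT = sqT.comp (substM M) := by
    apply MvPolynomial.algHom_ext
    intro i
    have := Lin_lf (M i)
    rw [Lin] at this
    simp only [AlgHom.comp_apply, substM_lf, this]
    simp [sqT, substM_lf]
  have := DFunLike.congr_fun this f
  simp only [AlgHom.comp_apply] at this
  rw [Sq_apply, Sq_apply, ← this]
  simp

theorem substM_H (M : Matrix (Fin 4) (Fin 4) kk) {f : P4} (hf : f ∈ H) : substM M f ∈ H := by
  refine H_ind (P := fun f => substM M f ∈ H) (by simp) ?_ ?_ hf
  · intro x y hx hy; rw [map_add]; exact add_mem hx hy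
  · intro k g; rw [substM_Sq]; exact Sq_mem (Nat.succ_pos _) _

theorem lf_homog (α : Fin 4 → kk) : lf α ∈ homog 1 :=
  Submodule.sum_mem _ fun i _ => Submodule.smul_mem _ _ (X_homog i)

theorem substM_homog (M : Matrix (Fin 4) (Fin 4) kk) {n : ℕ} {f : P4} (hf : f ∈ homog n) :
    substM M f ∈ homog n := by
  have : Submodule.span kk {p | ∃ c, dg c = n ∧ p = mon c} ≤
      (homog n).comap (substM M).toLinearMap := by
    rw [Submodule.span_le]; rintro _ ⟨c, h, rfl⟩
    show substM M (mon c) ∈ homog n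
    rw [← h, homog, mem_homogeneousSubmodule, mon, dg, map_prod]
    exact IsHomogeneous.prod _ _ _ fun i _ => by
      rw [map_pow, substM_lf]
      simpa using (show IsHomogeneous (lf (M i)) 1 from lf_homog _).pow (c i)
  rw [homog_span] at hf
  exact this hf



theorem nodup_iff_card {α : Type} [DecidableEq α] (l : List α) :
    l.Nodup ↔ l.toFinset.card = l.length :=
  (Multiset.toFinset_card_eq_card_iff_nodup (m := (l : Multiset α))).symm

theorem list_lemma {α β : Type} [DecidableEq α] (F : List α → β)
    (hc : ∀ i l l', F l = F l' → F (i :: l) = F (i :: l'))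
    (hs : ∀ i j l, F (i :: j :: l) = F (j :: i :: l))
    (hm : ∀ i j l, F (i :: i :: j :: l) = F (j :: j :: i :: l)) :
    ∀ l l' : List α, l.length = l'.length → l.toFinset = l'.toFinset → F l = F l' := by
  have hp : ∀ l l' : List α, l.Perm l' → F l = F l' := by
    intro l l' h
    induction h with
    | nil => rfl
    | cons i _ ih => exact hc _ _ _ ih
    | swap i j l => exact hs _ _ _
    | trans _ _ h1 h2 => exact h1.trans h2
  have hA : ∀ i j l, i ∈ l → j ∈ l → F (i :: l) = F (j :: l) := by
    intro i j l hi hj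
    by_cases hij : i = j
    · rw [hij]
    have hj' : j ∈ l.erase i := (List.mem_erase_of_ne (Ne.symm hij)).2 hj
    have p1 : l.Perm (i :: j :: (l.erase i).erase j) :=
      (List.perm_cons_erase hi).trans ((List.perm_cons_erase hj').cons i)
    rw [hp _ _ (p1.cons i), hp _ _ (p1.cons j), hm]
    exact hc _ _ _ (hs _ _ _)
  have hdup : ∀ l : List α, ¬ l.Nodup → ∃ i l1, i ∈ l1 ∧ l.Perm (i :: l1) := by
    intro l h
    obtain ⟨x, hx⟩ := List.exists_duplicate_iff_not_nodup.2 h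
    refine ⟨x, l.erase x, ?_, List.perm_cons_erase hx.mem⟩
    have := List.duplicate_iff_two_le_count.1 hx
    rw [← List.count_pos_iff, List.count_erase_self]
    omega
  intro l
  induction h : l.length generalizing l with
  | zero =>
    intro l' h1 _
    rw [List.eq_nil_of_length_eq_zero h, List.eq_nil_of_length_eq_zero h1.symm]
  | succ n ih =>
    intro l' h1 h2
    by_cases hn : l.Nodup
    · have hn' : l'.Nodup := by
        rw [nodup_iff_card] at hn ⊢
        rw [← h2, hn, h, h1]
      exact hp _ _ (List.perm_of_nodup_nodup_toFinset_eq hn hn' h2)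
    · have hn' : ¬ l'.Nodup := by
        rw [nodup_iff_card] at hn ⊢
        rw [← h2, ← h1, ← h]; exact hn
      obtain ⟨i, l1, hi, p1⟩ := hdup l hn
      obtain ⟨j, l2, hj, p2⟩ := hdup l' hn'
      have e1 : l.toFinset = l1.toFinset := by
        rw [List.toFinset_eq_of_perm _ _ p1, List.toFinset_cons, Finset.insert_eq_self]; simpa
      have e2 : l'.toFinset = l2.toFinset := by
        rw [List.toFinset_eq_of_perm _ _ p2, List.toFinset_cons, Finset.insert_eq_self]; simpa
      have e3 : l1.toFinset = l2.toFinset := by rw [← e1, ← e2, h2]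
      have hl1 : l1.length = n := by have := p1.length_eq; simp at this; omega
      have hl2 : l2.length = n := by have := p2.length_eq; simp at this; omega
      rw [hp _ _ p1, hp _ _ p2, hA i j l1 hi (by rw [← List.mem_toFinset, e3]; simpa)]
      exact hc _ _ _ (ih l1 hl1 l2 hl2.symm e3)

/-- a list of length `n` with support `S` -/
def wl (n : ℕ) (S : Finset (Fin 4)) : List (Fin 4) :=
  match S.toList with
  | [] => []
  | i :: l => List.replicate (n - (l.length + 1)) i ++ (i :: l)

theorem wl_spec {n : ℕ} {S : Finset (Fin 4)} (h : S.Nonempty) (hn : S.card ≤ n) :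
    (wl n S).length = n ∧ (wl n S).toFinset = S := by
  have h1 : S.toList.toFinset = S := Finset.toList_toFinset S
  have h2 := Finset.length_toList S
  have h3 : S.toList ≠ [] := by simpa using h.ne_empty
  unfold wl
  revert h1 h2 h3
  rcases S.toList with _ | ⟨i, l⟩
  · intro _ _ h; exact absurd rfl h
  · intro h1 h2 _
    simp only [List.length_cons] at h2
    refine ⟨?_, ?_⟩
    · simp; omega
    · simp only []
      rw [← h1]
      ext x; simp; tauto

def w : List (Fin 4) → P4
  | [] => 1
  | i :: l => X i * (w l)^2

theorem w_congr {l l' : List (Fin 4)} (h1 : l.length = l'.length) (h2 : l.toFinset = l'.toFinset) :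
    q (w l) = q (w l') := by
  refine list_lemma (fun l => q (w l)) ?_ ?_ ?_ l l' h1 h2
  · intro i l l' h; exact q_congr1 (Lin_X i) h
  · intro i j l; exact M1 (Lin_X i) (Lin_X j) _
  · intro i j l
    have := M1 (Lin_X i) (Lin_X j) (X i * X j * (w l)^4)
    simp only [w]
    convert this using 2 <;> ring

def sp (c : Fin 4 → ℕ) : Finset (Fin 4) := Finset.univ.filter fun i => c i ≠ 0
theorem mem_sp {c : Fin 4 → ℕ} {i : Fin 4} : i ∈ sp c ↔ c i ≠ 0 := by simp [sp]
theorem sp_add (c d : Fin 4 → ℕ) : sp (c + d) = sp c ∪ sp d := by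
  ext i; simp only [mem_sp, Finset.mem_union, Pi.add_apply]; omega
theorem sp_two (c : Fin 4 → ℕ) : sp (2 • c) = sp c := by
  ext i; simp [mem_sp]
theorem sp_ee (i : Fin 4) : sp (ee i) = {i} := by
  ext j; simp [mem_sp, ee, Pi.single_apply]
theorem sp_zero : sp 0 = ∅ := by ext; simp [mem_sp]

def tri (m : Fin 4) : Fin 4 → ℕ := fun i => if i = m then 0 else 1
theorem tri_ex : ∀ m j : Fin 4, j ≠ m → ∃ b d, tri m = ee j + ee b + ee d ∧ b ≠ j ∧ b ≠ m ∧ d ≠ j ∧ d ≠ m ∧ d ≠ b := by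
  decide
theorem dg_tri : ∀ m, dg (tri m) = 3 := by decide

theorem par_cases (c : Fin 4 → ℕ) (h : dg c % 2 = 1) :
    (∃ k e, c = ee k + 2 • e) ∨ ∃ m e, c = tri m + 2 • e := by
  have key : ∀ p : Fin 4 → Fin 2, (p 0 + p 1 + p 2 + p 3 = 1) →
      (∃ k, ∀ i, (p i : ℕ) = ee k i) ∨ ∃ m, ∀ i, (p i : ℕ) = tri m i := by decide
  have := key (fun i => ⟨c i % 2, Nat.mod_lt _ two_pos⟩) (by
    apply Fin.ext
    simp [dg, Fin.sum_univ_four] at h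
    simp [Fin.val_add]
    omega)
  rcases this with ⟨k, hk⟩ | ⟨k, hk⟩
  · refine Or.inl ⟨k, fun i => c i / 2, ?_⟩
    ext i; have := hk i; simp at this ⊢; omega
  · refine Or.inr ⟨k, fun i => c i / 2, ?_⟩
    ext i; have := hk i; simp at this ⊢; omega

theorem nz_ex {c : Fin 4 → ℕ} (h : dg c ≠ 0) : ∃ i d, c = ee i + d := by
  rcases exp_cases c with rfl | h'
  · simp [dg] at h
  · exact h'

/-- L1 -/
theorem L1 : ∀ (r : ℕ) (i j : Fin 4) (c : Fin 4 → ℕ), dg c + 1 = 2^r →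
    ∃ l : List (Fin 4), l.length = r + 2 ∧ l.toFinset = {i, j} ∪ sp c ∧
      q (X i * (X j * (mon c)^2)^2) = q (w l) := by
  intro r
  induction r with
  | zero =>
    intro i j c h
    refine ⟨[i, j], rfl, ?_, ?_⟩
    · rcases exp_cases c with rfl | ⟨k, d, rfl⟩
      · ext x; simp [sp_zero]
      · rw [dg_add, dg_ee] at h; omega
    · rcases exp_cases c with rfl | ⟨k, d, rfl⟩
      · simp [mon_zero, w]
      · rw [dg_add, dg_ee] at h; omega
  | succ r ih =>
    have L1b : ∀ (i j m : Fin 4) (e : Fin 4 → ℕ), dg e + 2 = 2^r → j ≠ m →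
      ∃ l : List (Fin 4), l.length = r + 1 + 2 ∧ l.toFinset = {i, j} ∪ sp (tri m + 2 • e) ∧
      q (X i * (X j * (mon (tri m + 2 • e))^2)^2) = q (w l) := by
      intro i j m e he hjm
      obtain ⟨b, d, hbd, -⟩ := tri_ex m j hjm
      obtain ⟨l, h1, h2, h3⟩ := ih b d (ee j + e) (by rw [dg_add, dg_ee]; omega)
      refine ⟨i :: l, by simp [h1], ?_, ?_⟩
      · rw [List.toFinset_cons, h2, hbd]; ext x; simp only [sp_add, sp_ee, sp_two, Finset.mem_insert, Finset.mem_union, Finset.mem_singleton]; tauto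
      · refine q_congr1 (Lin_X i) (Eq.trans ?_ h3)
        rw [hbd]
        have := M1 (Lin_X j) (Lin_X b) (X j * X d * (mon e)^2)
        simp only [mon_add, mon_two, mon_ee]
        convert this using 2 <;> ring
    have L1c : ∀ (i j m : Fin 4) (e : Fin 4 → ℕ), dg e + 2 = 2^r → i ≠ m →
      ∃ l : List (Fin 4), l.length = r + 1 + 2 ∧ l.toFinset = {i, j} ∪ sp (tri m + 2 • e) ∧
      q (X i * (X j * (mon (tri m + 2 • e))^2)^2) = q (w l) := by
      intro i j m e he him
      obtain ⟨l, h1, h2, h3⟩ := L1b j i m e he him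
      refine ⟨l, h1, by rw [h2, Finset.pair_comm], ?_⟩
      rw [← h3]; exact M1 (Lin_X i) (Lin_X j) _
    intro i j c h
    rw [pow_succ] at h
    rcases par_cases c (by omega) with ⟨k, e, rfl⟩ | ⟨m, e, rfl⟩
    · rw [dg_add, dg_two, dg_ee] at h
      obtain ⟨l, h1, h2, h3⟩ := ih j k e (by omega)
      refine ⟨i :: l, by simp [h1], ?_, ?_⟩
      · rw [List.toFinset_cons, h2]; ext x; simp only [sp_add, sp_ee, sp_two, Finset.mem_insert, Finset.mem_union, Finset.mem_singleton]; tauto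
      · refine q_congr1 (Lin_X i) (Eq.trans ?_ h3)
        rw [mon_add, mon_two, mon_ee]
    · rw [dg_add, dg_two, dg_tri] at h
      have he : dg e + 2 = 2^r := by omega
      by_cases hj : j ≠ m
      · exact L1b i j m e he hj
      by_cases hi : i ≠ m
      · exact L1c i j m e he hi
      push Not at hi hj
      subst hi; subst hj
      obtain ⟨a, ha⟩ : ∃ a : Fin 4, a ≠ j := ⟨j + 1, by revert j; decide⟩
      obtain ⟨b, d, hbd, -⟩ := tri_ex j a ha
      obtain ⟨l, h1, h2, h3⟩ := L1c j a a e he ha.symm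
      have ht : tri a = ee j + ee b + ee d := by
        have key : ∀ j a b d : Fin 4, a ≠ j → tri j = ee a + ee b + ee d → tri a = ee j + ee b + ee d := by
          decide
        exact key _ _ _ _ ha hbd
      refine ⟨l, h1, ?_, ?_⟩
      · rw [h2, ht, hbd]; ext x; simp only [sp_add, sp_ee, sp_two, Finset.mem_insert, Finset.mem_union, Finset.mem_singleton]; tauto
      · rw [← h3]
        refine q_congr1 (Lin_X j) ?_
        rw [hbd, ht]
        have := M1 (Lin_X j) (Lin_X a) (X b * X d * (mon e)^2)
        simp only [mon_add, mon_two, mon_ee]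
        convert this using 2 <;> ring



def D (r : ℕ) (a b : Fin 4) (c : Fin 4 → ℕ) : P4 ⧸ H :=
  q (X a * X b * (mon c)^2) + q (X a * X b * (w (wl (r+2) (sp c)))^2)

theorem D_comm (r : ℕ) (a b : Fin 4) (c : Fin 4 → ℕ) : D r a b c = D r b a c := by
  rw [D, D, mul_comm (X a) (X b)]

theorem card_le4 (S : Finset (Fin 4)) : S.card ≤ 4 := by
  simpa using Finset.card_le_univ S

theorem sp_ne {c : Fin 4 → ℕ} (h : dg c ≠ 0) : (sp c).Nonempty := by
  obtain ⟨i, d, rfl⟩ := nz_ex h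
  exact ⟨i, by simp [sp_add, sp_ee]⟩

section
variable {r : ℕ} (hr : 3 ≤ r)
include hr

theorem D_word {a b : Fin 4} {c : Fin 4 → ℕ} (hc : dg c ≠ 0) {l : List (Fin 4)} (h1 : l.length = r + 2)
    (h2 : l.toFinset = sp c) (h : q (mon c) = q (w l)) : D r a b c = 0 := by
  have := wl_spec (n := r+2) (sp_ne hc) ((card_le4 _).trans (by omega))
  rw [D, q_add0]
  refine q_congr2 (Lin_X a) (Lin_X b) (h.trans (w_congr ?_ ?_))
  · rw [h1, this.1]
  · rw [h2, this.2]

theorem LR1 (i j k : Fin 4) (g : Fin 4 → ℕ) (hg : dg g ≠ 0) :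
    D r j k (ee i + g) + D r i k (ee j + g) + D r i j (ee k + g) = 0 := by
  have A := R1 (Lin_X i) (Lin_X j) (Lin_X k) (mon g)
  have s1 := wl_spec (n := r+1) (sp_ne hg) ((card_le4 _).trans (by omega))
  have key : ∀ a b i : Fin 4, q (X a * X b * (w (wl (r+2) (sp (ee i + g))))^2)
      = q (X a * X b * (X i * (w (wl (r+1) (sp g)))^2)^2) := by
    intro a b i
    refine q_congr2 (Lin_X a) (Lin_X b) ?_
    have s2 := wl_spec (n := r+2) (sp_ne (c := ee i + g) (by rw [dg_add]; omega)) ((card_le4 _).trans (by omega))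
    refine w_congr (l' := i :: (wl (r+1) (sp g))) ?_ ?_
    · rw [s2.1, List.length_cons, s1.1]
    · rw [s2.2, List.toFinset_cons, s1.2, sp_add, sp_ee]; rfl
  have B := R1 (Lin_X i) (Lin_X j) (Lin_X k) ((w (wl (r+1) (sp g)))^2)
  simp only [D, key]
  simp only [mon_add, mon_ee]
  calc _ = _ := by abel
       _ = _ := congrArg₂ (· + ·) A B
       _ = 0 := by simp

omit hr in
theorem Lm1 (a b i j : Fin 4) (g : Fin 4 → ℕ) :
    D r a b (ee i + 2 • (ee j + g)) = D r a b (ee j + 2 • (ee i + g)) := by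
  have e : sp (ee i + 2 • (ee j + g)) = sp (ee j + 2 • (ee i + g)) := by
    ext x; simp only [sp_add, sp_ee, sp_two, Finset.mem_union, Finset.mem_singleton]; tauto
  rw [D, D, e]
  refine congrArg₂ (· + ·) ?_ rfl
  refine q_congr2 (Lin_X a) (Lin_X b) ?_
  have := M1 (Lin_X i) (Lin_X j) (mon g)
  simp only [mon_add, mon_two, mon_ee]
  exact this

theorem DL1 (a b i j : Fin 4) (c : Fin 4 → ℕ) (hc : dg c + 1 = 2^r) :
    D r a b (ee i + 2 • (ee j + 2 • c)) = 0 := by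
  obtain ⟨l, h1, h2, h3⟩ := L1 r i j c hc
  refine D_word hr ?_ h1 ?_ ?_
  · rw [dg_add, dg_ee]; omega
  · rw [h2]; ext x; simp only [sp_add, sp_ee, sp_two, Finset.mem_union, Finset.mem_insert, Finset.mem_singleton]; tauto
  · rw [← h3]; simp only [mon_add, mon_two, mon_ee]

theorem T1a (a b i m : Fin 4) (u : Fin 4 → ℕ) (hu : dg u + 2 = 2^r) (him : i ≠ m) :
    D r a b (ee i + 2 • (tri m + 2 • u)) = 0 := by
  obtain ⟨j, k, h, -⟩ := tri_ex m i him
  rw [h, show ee i + ee j + ee k + 2 • u = ee j + (ee i + ee k + 2 • u) by abel, Lm1]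
  rw [show ee i + (ee i + ee k + 2 • u) = ee k + 2 • (ee i + u) by
    rw [smul_add, two_nsmul (ee i)]; abel]
  exact DL1 hr _ _ _ _ _ (by rw [dg_add, dg_ee]; omega)

theorem T1 (a b i : Fin 4) (c : Fin 4 → ℕ) (hab : a ≠ b) (hc : dg c + 1 = 2^(r+1)) :
    D r a b (ee i + 2 • c) = 0 := by
  have hp : 2^(r+1) = 2 * 2^r := by ring
  have h8 : 2^3 ≤ 2^r := Nat.pow_le_pow_right (by norm_num) hr
  rcases par_cases c (by omega) with ⟨k, e, rfl⟩ | ⟨m, u, rfl⟩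
  · rw [dg_add, dg_ee, dg_two] at hc
    exact DL1 hr _ _ _ _ _ (by omega)
  · rw [dg_add, dg_tri, dg_two] at hc
    by_cases him : i ≠ m
    · exact T1a hr _ _ _ _ _ (by omega) him
    push Not at him; subst him
    obtain ⟨p, hpa, hpb⟩ : ∃ p : Fin 4, p ≠ a ∧ p ≠ b := by clear hc hab; revert a b; decide
    have key : D r a b (ee p + 2 • (tri p + 2 • u)) = 0 := by
      have := LR1 hr p a b (2 • (tri p + 2 • u)) (by rw [dg_two, dg_add, dg_tri]; omega)
      rwa [T1a hr p b a p u (by omega) hpa.symm, T1a hr p a b p u (by omega) hpb.symm, add_zero, add_zero] at this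
    by_cases hpi : p = i
    · rwa [hpi] at key
    · obtain ⟨x, y, h, -⟩ := tri_ex i p hpi
      have k2 : ∀ i p x y : Fin 4, p ≠ i → tri i = ee p + ee x + ee y → tri p = ee i + ee x + ee y := by decide
      have h' := k2 _ _ _ _ hpi h
      rw [h, show ee p + ee x + ee y + 2 • u = ee p + (ee x + ee y + 2 • u) by abel, Lm1]
      rwa [h', show ee i + ee x + ee y + 2 • u = ee i + (ee x + ee y + 2 • u) by abel] at key

theorem T3a (i j l : Fin 4) (v : Fin 4 → ℕ) (hij : i ≠ j) (hli : i ≠ l) (hlj : j ≠ l)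
    (hv : dg v + 2 = 2^(r+1)) : D r i j (tri l + 2 • v) = 0 := by
  obtain ⟨k, hk, hki, hkj⟩ : ∃ k, tri l = ee k + (ee i + ee j) ∧ k ≠ i ∧ k ≠ j := by
    clear hv; revert i j l; decide
  have := LR1 hr i j k (ee i + ee j + 2 • v) (by rw [dg_add, dg_add, dg_ee]; omega)
  rw [show ee i + (ee i + ee j + 2 • v) = ee j + 2 • (ee i + v) by rw [smul_add, two_nsmul (ee i)]; abel,
    show ee j + (ee i + ee j + 2 • v) = ee i + 2 • (ee j + v) by rw [smul_add, two_nsmul (ee j)]; abel,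
    T1 hr _ _ _ _ hkj.symm (by rw [dg_add, dg_ee]; omega), T1 hr _ _ _ _ hki.symm (by rw [dg_add, dg_ee]; omega),
    zero_add, zero_add, ← add_assoc, ← hk] at this
  exact this

theorem T3b (i k l : Fin 4) (v : Fin 4 → ℕ) (hik : i ≠ k) (hil : i ≠ l)
    (hv : dg v + 2 = 2^(r+1)) : D r i l (tri l + 2 • v) = D r i k (tri k + 2 • v) := by
  by_cases hkl : k = l
  · rw [hkl]
  obtain ⟨j, h1, h2⟩ : ∃ j, tri l = ee k + (ee i + ee j) ∧ tri k = ee l + (ee i + ee j) := by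
    clear hv; revert i k l; decide
  have := LR1 hr k l i (ee i + ee j + 2 • v) (by rw [dg_add, dg_add, dg_ee]; omega)
  rw [show ee i + (ee i + ee j + 2 • v) = ee j + 2 • (ee i + v) by rw [smul_add, two_nsmul (ee i)]; abel,
    T1 hr _ _ _ _ hkl (by rw [dg_add, dg_ee]; omega), add_zero, ← add_assoc, ← h1, ← add_assoc, ← h2, q_add0,
    D_comm r l i, D_comm r k i] at this
  exact this

/-- the remaining invariant -/
def E (r : ℕ) (c : Fin 4) (v : Fin 4 → ℕ) : P4 ⧸ H := D r c (c+1) (tri (c+1) + 2 • v)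

theorem E_eq (c l : Fin 4) (v : Fin 4 → ℕ) (h : c ≠ l) (hv : dg v + 2 = 2^(r+1)) :
    D r c l (tri l + 2 • v) = E r c v :=
  T3b hr c (c+1) l v (by clear h; revert c; decide) h hv

theorem Six (x : Fin 4) (v : Fin 4 → ℕ) (hv : dg v + 2 = 2^(r+1)) :
    D r 0 1 (ee 2 + ee 3 + (ee x + 2 • v)) + D r 0 2 (ee 1 + ee 3 + (ee x + 2 • v))
    + D r 0 3 (ee 1 + ee 2 + (ee x + 2 • v)) + D r 1 2 (ee 0 + ee 3 + (ee x + 2 • v))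
    + D r 1 3 (ee 0 + ee 2 + (ee x + 2 • v)) + D r 2 3 (ee 0 + ee 1 + (ee x + 2 • v)) = E r x v := by
  have Z : ∀ a b k l : Fin 4, a ≠ b → D r a b (ee k + ee l + (ee k + 2 • v)) = 0 := by
    intro a b k l hab
    rw [show ee k + ee l + (ee k + 2 • v) = ee l + 2 • (ee k + v) by rw [smul_add, two_nsmul (ee k)]; abel]
    exact T1 hr _ _ _ _ hab (by rw [dg_add, dg_ee]; omega)
  have Z' : ∀ a b k l : Fin 4, a ≠ b → D r a b (ee l + ee k + (ee k + 2 • v)) = 0 := by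
    intro a b k l hab
    rw [add_comm (ee l)]; exact Z a b k l hab
  have Y : ∀ a b k l : Fin 4, a ≠ b → tri b = ee k + ee l + ee a →
      D r a b (ee k + ee l + (ee a + 2 • v)) = E r a v := by
    intro a b k l hab h
    rw [← add_assoc, ← h, E_eq hr _ _ _ hab hv]
  have Y' : ∀ a b k l : Fin 4, a ≠ b → tri b = ee k + ee l + ee a →
      D r b a (ee k + ee l + (ee a + 2 • v)) = E r a v := by
    intro a b k l hab h
    rw [D_comm]; exact Y a b k l hab h
  have three : ∀ x : P4 ⧸ H, x + x + x = x := by intro x; rw [q_self, zero_add]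
  fin_cases x
  · simp only [Fin.zero_eta]
    rw [Y 0 1 2 3 (by decide) (by decide), Y 0 2 1 3 (by decide) (by decide), Y 0 3 1 2 (by decide) (by decide),
      Z _ _ _ _ (by decide), Z _ _ _ _ (by decide), Z _ _ _ _ (by decide)]
    simp [three]
  · simp only [Fin.mk_one]
    rw [Y' 1 0 2 3 (by decide) (by decide), Y 1 2 0 3 (by decide) (by decide), Y 1 3 0 2 (by decide) (by decide),
      Z 0 2 1 3 (by decide), Z 0 3 1 2 (by decide), Z' 2 3 1 0 (by decide)]
    simp [three]
  · simp only [Fin.reduceFinMk]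
    rw [Y' 2 0 1 3 (by decide) (by decide), Y' 2 1 0 3 (by decide) (by decide), Y 2 3 0 1 (by decide) (by decide),
      Z 0 1 2 3 (by decide), Z' 0 3 2 1 (by decide), Z' 1 3 2 0 (by decide)]
    simp [three]
  · simp only [Fin.reduceFinMk]
    rw [Y' 3 0 1 2 (by decide) (by decide), Y' 3 1 0 2 (by decide) (by decide), Y' 3 2 0 1 (by decide) (by decide),
      Z' 0 1 3 2 (by decide), Z' 0 2 3 1 (by decide), Z' 1 2 3 0 (by decide)]
    simp [three]

theorem R2D (c d : Fin 4) (v v' : Fin 4 → ℕ) (hv : dg v + 2 = 2^(r+1)) (hv' : dg v' + 2 = 2^(r+1))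
    (hsp : sp (ee c + 2 • v) = sp (ee d + 2 • v')) (h1 h2 : P4) (h0 : Sq 1 h1 + Sq 2 h2 = 0)
    (hp : mon (ee c + 2 • v) + mon (ee d + 2 • v') = h1 + Sq 1 h2) : E r c v = E r d v' := by
  rw [← q_add0, ← Six hr c v hv, ← Six hr d v' hv']
  have R := R2 (Lin_X 0) (Lin_X 1) (Lin_X 2) (Lin_X 3) h0 hp
  have key : ∀ a b k l : Fin 4, q (X a * X b * (X k * X l * (mon (ee c + 2 • v) + mon (ee d + 2 • v')))^2)
    = D r a b (ee k + ee l + (ee c + 2 • v)) + D r a b (ee k + ee l + (ee d + 2 • v')) := by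
    intro a b k l
    have e : sp (ee k + ee l + (ee c + 2 • v)) = sp (ee k + ee l + (ee d + 2 • v')) := by
      rw [sp_add, hsp, ← sp_add]
    rw [D, D, e, mul_add, CharTwo.add_sq, mul_add, map_add]
    rw [mon_add (ee k + ee l), mon_add (ee k), mon_ee, mon_ee, mon_add (ee k + ee l), mon_add (ee k), mon_ee, mon_ee]
    rw [add_add_add_comm, q_self, add_zero]
  simp only [key] at R
  rw [← R]; abel

theorem EA (c d : Fin 4) (y : Fin 4 → ℕ) (hy : dg y + 3 = 2^(r+1)) :
    E r c (ee d + y) = E r d (ee c + y) := by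
  refine R2D hr c d _ _ (by rw [dg_add, dg_ee]; omega) (by rw [dg_add, dg_ee]; omega) ?_
    (mon (ee c + 2 • (ee d + y)) + mon (ee d + 2 • (ee c + y))) 0 ?_ ?_
  · ext x; simp only [sp_add, sp_ee, sp_two, Finset.mem_union, Finset.mem_singleton]; tauto
  · simp only [mon_add, mon_ee, mon_two, map_add, map_zero, Sq_lin1 (Lin_X _), Sq1_sq]
    linear_combination (X c * X d * mon y)^2 * two0
  · rw [map_zero, add_zero]

theorem EB (c d : Fin 4) (y : Fin 4 → ℕ) (hy : dg y + 4 = 2^(r+1)) :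
    E r c (2 • ee d + y) = E r d (2 • ee c + y) := by
  have hz := Sq1_Sq1 (mon y)
  set z := Sq 1 (mon y) with hzd
  refine R2D hr c d _ _ (by rw [dg_add, dg_two, dg_ee]; omega) (by rw [dg_add, dg_two, dg_ee]; omega) ?_
    (X c * ((X d)^2 * mon y)^2 + X d * ((X c)^2 * mon y)^2 + (X d * (X c * z)^2 + X c * (X d * z)^2))
      ((X c * X d * mon y)^2 + X c * (X d * z^2)) ?_ ?_
  · ext x; simp only [sp_add, sp_ee, sp_two, Finset.mem_union, Finset.mem_singleton]; tauto
  · simp only [map_add, mul_assoc, Sq_lin1 (Lin_X _), Sq_lin2 (Lin_X _), Sq1_sq, Sq2_sq, ← hzd, hz]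
    linear_combination ((X c)^4 * (X d)^2 * (mon y)^2 + (X d)^4 * (X c)^2 * (mon y)^2 + (X c)^3 * (X d)^3 * (mon y)^2 + 2 * (X c)^2 * (X d)^2 * z^2 + (X c)^3 * (X d)^2 * z * mon y + (X c)^2 * (X d)^3 * z * mon y) * two0
  · simp only [mon_add, mon_ee, mon_two, map_add, map_zero, Sq_lin1 (Lin_X _), Sq1_sq]
    linear_combination  -(X d * (X c * z)^2 + X c * (X d * z)^2) * two0
end


def psi (a b : P4) : P4 →ₗ[kk] P4 ⧸ H :=
  AddMonoidHom.toZModLinearMap 2 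
    { toFun := fun f => q (a * b * f^2)
      map_zero' := by simp
      map_add' := fun f g => by rw [CharTwo.add_sq, mul_add, map_add] }
theorem psi_apply (a b f : P4) : psi a b f = q (a * b * f^2) := rfl

theorem psi_congr {a b f g : P4} (ha : Lin a) (hb : Lin b) (h : q f = q g) : psi a b f = psi a b g :=
  q_congr2 ha hb h

section
variable {r : ℕ} (hr : 3 ≤ r)
include hr

theorem EC (p : Fin 4) (v : Fin 4 → ℕ) (hv : dg v + 1 = 2^r) : E r p (2 • v) = 0 := by
  have h8 : 2^3 ≤ 2^r := Nat.pow_le_pow_right (by norm_num) hr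
  have hp2 : 2^(r+1) = 2 * 2^r := by ring
  have hpl : p ≠ p + 1 := by revert p; decide
  obtain ⟨a, u, rfl⟩ := nz_ex (c := v) (by omega)
  rw [dg_add, dg_ee] at hv
  obtain ⟨j, k, ht, -⟩ := tri_ex (p+1) p hpl
  have S := S2 (Lin_X p) (Lin_X j) (Lin_X k) (X a * (mon u)^2)
  rw [Sq_lin1 (Lin_X a), Sq1_sq, mul_zero, zero_add] at S
  simp only [← map_add] at S
  have S' := psi_congr (Lin_X p) (Lin_X (p+1)) (S.trans (map_zero q).symm)
  simp only [map_add, map_zero] at S'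
  have t1 := T1 hr p (p+1) p (ee j + ee k + ee a + 2 • u) hpl (by simp only [dg_add, dg_ee, dg_two]; omega)
  have t2 := T1 hr p (p+1) j (ee p + ee k + ee a + 2 • u) hpl (by simp only [dg_add, dg_ee, dg_two]; omega)
  have t3 := T1 hr p (p+1) k (ee p + ee j + ee a + 2 • u) hpl (by simp only [dg_add, dg_ee, dg_two]; omega)
  rw [E, ht]
  have e1 : sp (ee p + 2 • (ee j + ee k + ee a + 2 • u)) = sp (ee p + ee j + ee k + 2 • (2 • (ee a + u))) := by
    ext x; simp only [sp_add, sp_ee, sp_two, Finset.mem_union, Finset.mem_singleton]; tauto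
  have e2 : sp (ee j + 2 • (ee p + ee k + ee a + 2 • u)) = sp (ee p + ee j + ee k + 2 • (2 • (ee a + u))) := by
    ext x; simp only [sp_add, sp_ee, sp_two, Finset.mem_union, Finset.mem_singleton]; tauto
  have e3 : sp (ee k + 2 • (ee p + ee j + ee a + 2 • u)) = sp (ee p + ee j + ee k + 2 • (2 • (ee a + u))) := by
    ext x; simp only [sp_add, sp_ee, sp_two, Finset.mem_union, Finset.mem_singleton]; tauto
  rw [D, e1, q_add0] at t1
  rw [D, e2, q_add0] at t2
  rw [D, e3, q_add0] at t3
  rw [D, ← t1, q_add0]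
  simp only [psi_apply] at S'
  simp only [mon_add, mon_ee, mon_two, mul_assoc] at S' t1 t2 t3 ⊢
  rw [t1, t2, t3, add_assoc, q_self, add_zero, q_add0] at S'
  rw [t1]
  convert S' using 2
  ring

def EZ (r : ℕ) (z : Fin 4 → ℕ) : Prop := ∀ c v, z = ee c + v → E r c v = 0

theorem EZ_of (c : Fin 4) (v : Fin 4 → ℕ) (hv : dg v + 2 = 2^(r+1)) (h : E r c v = 0) : EZ r (ee c + v) := by
  intro d v' h'
  by_cases hcd : c = d
  · subst hcd; rw [← add_left_cancel h']; exact h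
  · have hd : v d ≠ 0 := by
      have := congrFun h' d
      simp [ee, Pi.single_apply, Ne.symm hcd] at this; omega
    obtain ⟨y, rfl⟩ : ∃ y, v = ee d + y := by
      refine ⟨v - ee d, ?_⟩
      ext x
      by_cases hx : x = d
      · subst hx; simp [ee]; omega
      · simp [ee, Pi.single_apply, hx]
    have : v' = ee c + y := by
      apply add_left_cancel (a := ee d); rw [← h']; abel
    subst this
    rw [dg_add, dg_ee] at hv
    rw [← EA hr c d y (by omega)]; exact h

theorem EZ_move (c d : Fin 4) (y : Fin 4 → ℕ) (hy : dg y + 4 = 2^(r+1)) (h : EZ r (ee d + (2 • ee c + y))) :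
    EZ r (ee c + (2 • ee d + y)) := by
  refine EZ_of hr _ _ (by rw [dg_add, dg_two, dg_ee]; omega) ?_
  rw [EB hr c d y hy]; exact h _ _ rfl

theorem EZ_all (z : Fin 4 → ℕ) (hz : dg z + 1 = 2^(r+1)) : EZ r z := by
  have hp2 : 2^(r+1) = 2 * 2^r := by ring
  have h8 : 2^3 ≤ 2^r := Nat.pow_le_pow_right (by norm_num) hr
  have Z1 : ∀ k e, dg (ee k + 2 • e) + 1 = 2^(r+1) → EZ r (ee k + 2 • e) := by
    intro k e he
    rw [dg_add, dg_ee, dg_two] at he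
    exact EZ_of hr _ _ (by rw [dg_two]; omega) (EC hr k e (by omega))
  rcases par_cases z (by omega) with ⟨k, e, rfl⟩ | ⟨m, u, rfl⟩
  · exact Z1 k e hz
  · rw [dg_add, dg_tri, dg_two] at hz
    by_cases hu : ∃ i, i ≠ m ∧ u i ≠ 0
    · obtain ⟨i, him, hi⟩ := hu
      obtain ⟨j, k, ht, -⟩ := tri_ex m i him
      obtain ⟨u', rfl⟩ : ∃ y, u = ee i + y := by
        refine ⟨u - ee i, ?_⟩
        ext x
        by_cases hx : x = i
        · subst hx; simp [ee]; omega
        · simp [ee, Pi.single_apply, hx]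
      rw [dg_add, dg_ee] at hz
      have := EZ_move hr j i (ee i + ee k + 2 • u') (by simp only [dg_add, dg_ee, dg_two]; omega)
        (by
          have e : ee i + (2 • ee j + (ee i + ee k + 2 • u')) = ee k + 2 • (ee i + ee j + u') := by
            simp only [two_nsmul]; abel
          rw [e]
          exact Z1 _ _ (by simp only [dg_add, dg_ee, dg_two]; omega))
      convert this using 1
      rw [ht]; simp only [two_nsmul]; abel
    · push Not at hu
      obtain ⟨i, him⟩ : ∃ i : Fin 4, i ≠ m := ⟨m+1, by clear hu hz; revert m; decide⟩
      obtain ⟨j, k, ht, -⟩ := tri_ex m i him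
      have hum : u m = dg u := by
        rw [dg, Finset.sum_eq_single m (fun b _ hb => hu b hb) (by simp)]
      obtain ⟨u', rfl⟩ : ∃ y, u = ee m + (ee m + y) := by
        refine ⟨u - ee m - ee m, ?_⟩
        ext x
        by_cases hx : x = m
        · subst hx; simp [ee]; omega
        · simp [ee, Pi.single_apply, hx]
      simp only [dg_add, dg_ee] at hz
      have := EZ_move hr j m (ee m + 2 • ee i + ee k + 2 • u') (by simp only [dg_add, dg_ee, dg_two]; omega)
        (by
          have e : ee m + (2 • ee j + (ee m + 2 • ee i + ee k + 2 • u')) = ee k + 2 • (ee m + ee i + ee j + u') := by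
            simp only [two_nsmul]; abel
          rw [e]
          exact Z1 _ _ (by simp only [dg_add, dg_ee, dg_two]; omega))
      have := EZ_move hr i m (ee j + ee k + 2 • (ee m + u')) (by simp only [dg_add, dg_ee, dg_two]; omega)
        (by
          convert this using 1
          simp only [two_nsmul]; abel)
      convert this using 1
      rw [ht]; simp only [two_nsmul]; abel

theorem D_all (a b : Fin 4) (hab : a ≠ b) (c : Fin 4 → ℕ) (hc : dg c + 1 = 2^(r+2)) : D r a b c = 0 := by
  have hp2 : 2^(r+2) = 2 * 2^(r+1) := by ring
  have hp1 : 2^(r+1) = 2 * 2^r := by ring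
  rcases par_cases c (by omega) with ⟨k, e, rfl⟩ | ⟨l, v, rfl⟩
  · rw [dg_add, dg_ee, dg_two] at hc
    exact T1 hr _ _ _ _ hab (by omega)
  · rw [dg_add, dg_tri, dg_two] at hc
    by_cases hb : b = l
    · subst hb
      rw [E_eq hr _ _ _ hab (by omega)]
      exact EZ_all hr (ee a + v) (by rw [dg_add, dg_ee]; omega) _ _ rfl
    by_cases ha : a = l
    · subst ha
      rw [D_comm, E_eq hr _ _ _ hab.symm (by omega)]
      exact EZ_all hr (ee b + v) (by rw [dg_add, dg_ee]; omega) _ _ rfl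
    exact T3a hr a b l v hab ha hb (by omega)

theorem psi_mon (a b : Fin 4) (c : Fin 4 → ℕ) (hc : dg c + 1 = 2^(r+2)) :
    psi (X a) (X b) (mon c) = psi (X a) (X b) (w (wl (r+2) (sp c))) := by
  by_cases hab : a = b
  · subst hab
    simp only [psi_apply, ← pow_two, q_sq (Lin_X a)]
  · rw [← q_add0]; exact D_all hr a b hab c hc

end

def ind (T : Finset (Fin 4)) : Fin 4 → kk := fun i => if i ∈ T then 1 else 0

theorem eval_mon (T : Finset (Fin 4)) (c : Fin 4 → ℕ) :
    eval (ind T) (mon c) = if sp c ⊆ T then 1 else 0 := by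
  rw [mon, map_prod]
  simp only [map_pow, eval_X]
  split_ifs with h
  · apply Finset.prod_eq_one
    intro i _
    by_cases hi : i ∈ T
    · simp [ind, hi]
    · have : c i = 0 := by by_contra h'; exact hi (h (mem_sp.2 h'))
      simp [this]
  · obtain ⟨i, h1, h2⟩ := Finset.not_subset.1 h
    apply Finset.prod_eq_zero (Finset.mem_univ i)
    simp [ind, h2, mem_sp.1 h1]

theorem mob (S U : Finset (Fin 4)) : (∑ T ∈ S.powerset, if U ⊆ T then (1:kk) else 0) = if U = S then 1 else 0 := by
  revert S U
  decide +kernel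

theorem psi_fun {r : ℕ} (hr : 3 ≤ r) (a b : Fin 4) {g : P4} (hg : g ∈ homog (2^(r+2) - 1)) :
    psi (X a) (X b) g = ∑ S : Finset (Fin 4), (∑ T ∈ S.powerset, eval (ind T) g) • psi (X a) (X b) (w (wl (r+2) S)) := by
  rw [homog_span] at hg
  induction hg using Submodule.span_induction with
  | mem x hx =>
    obtain ⟨c, hc, rfl⟩ := hx
    have : 0 < 2^(r+2) := by positivity
    rw [psi_mon hr a b c (by omega)]
    simp only [eval_mon, mob, ite_smul, one_smul, zero_smul]
    rw [Finset.sum_ite_eq]; simp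
  | zero => simp
  | add x y _ _ h1 h2 =>
    simp only [map_add, h1, h2, Finset.sum_add_distrib, add_smul]
  | smul c x _ h =>
    simp only [map_smul, h, Finset.smul_sum, smul_eval, smul_smul, ← Finset.mul_sum]

theorem q_lf (α β : Fin 4 → kk) (f : P4) : q (lf α * lf β * f) = ∑ i, ∑ j, (α i * β j) • q (X i * X j * f) := by
  rw [lf, lf, Finset.sum_mul_sum, Finset.sum_mul, map_sum]
  refine Finset.sum_congr rfl fun i _ => ?_
  rw [Finset.sum_mul, map_sum]
  refine Finset.sum_congr rfl fun j _ => ?_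
  rw [smul_mul_smul_comm, smul_mul_assoc, map_smul]

theorem ind_ex (u : Fin 4 → kk) : ∃ T, u = ind T := by
  refine ⟨Finset.univ.filter fun i => u i = 1, ?_⟩
  ext i
  have : ∀ x : kk, x = if x = 1 then 1 else 0 := by decide
  simpa [ind] using this (u i)

theorem eval_zero_homog {n : ℕ} (hn : 0 < n) {g : P4} (hg : g ∈ homog n) : eval (0 : Fin 4 → kk) g = 0 := by
  rw [homog_span] at hg
  induction hg using Submodule.span_induction with
  | mem x hx =>
    obtain ⟨c, hc, rfl⟩ := hx
    obtain ⟨i, d, rfl⟩ := nz_ex (c := c) (by omega)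
    rw [mon_add, mon_ee]; simp
  | zero => simp
  | add x y _ _ h1 h2 => rw [map_add, h1, h2, add_zero]
  | smul c x _ h => rw [smul_eval, h, mul_zero]

theorem J_mem {r : ℕ} (hr : 3 ≤ r) (α β : Fin 4 → kk) {g : P4} (hg : g ∈ homog (2^(r+2) - 1))
    (h0 : ∀ u, u ≠ 0 → eval u g = 0) : q (lf α * lf β * g^2) = 0 := by
  have h1 : ∀ u, eval u g = 0 := by
    intro u
    by_cases hu : u = 0
    · subst hu
      have h8 : 2^3 ≤ 2^(r+2) := Nat.pow_le_pow_right (by norm_num) (by omega)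
      exact eval_zero_homog (by omega) hg
    · exact h0 u hu
  rw [q_lf]
  refine Finset.sum_eq_zero fun i _ => Finset.sum_eq_zero fun j _ => ?_
  rw [← psi_apply, psi_fun hr i j hg]
  simp [h1]


theorem lf_add (α β : Fin 4 → kk) : lf (α + β) = lf α + lf β := by
  simp [lf, add_smul, Finset.sum_add_distrib]
theorem lf_smul (c : kk) (α : Fin 4 → kk) : lf (c • α) = c • lf α := by
  simp [lf, mul_smul, Finset.smul_sum]
def lfL : (Fin 4 → kk) →ₗ[kk] P4 where
  toFun := lf
  map_add' := lf_add
  map_smul' := lf_smul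
theorem lf_sum {ι : Type} (s : Finset ι) (f : ι → Fin 4 → kk) : lf (∑ i ∈ s, f i) = ∑ i ∈ s, lf (f i) :=
  map_sum lfL f s
theorem lf_single (i : Fin 4) : lf (Pi.single i 1) = X i := by
  simp [lf, Pi.single_apply]
theorem lf_zero : lf 0 = 0 := map_zero lfL

def piv (v : Fin 4 → kk) : Fin 4 := if h : ∃ i, v i = 1 then h.choose else 0
theorem piv_spec {v : Fin 4 → kk} (hv : v ≠ 0) : v (piv v) = 1 := by
  have h : ∃ i, v i = 1 := by
    obtain ⟨i, hi⟩ := Function.ne_iff.1 hv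
    have : ∀ x : kk, x ≠ 0 → x = 1 := by decide
    exact ⟨i, this _ hi⟩
  rw [piv, dif_pos h]; exact h.choose_spec

def yf (v : Fin 4 → kk) : Fin 4 → kk := Pi.single (piv v) 1
def zf (v : Fin 4 → kk) (k : Fin 4) : Fin 4 → kk := Pi.single k 1 + v k • Pi.single (piv v) 1

theorem yf_dot (v u : Fin 4 → kk) : yf v ⬝ᵥ u = u (piv v) := by simp [yf]
theorem zf_dot (v u : Fin 4 → kk) (k : Fin 4) : zf v k ⬝ᵥ u = u k + v k * u (piv v) := by
  simp [zf, add_dotProduct]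
theorem zf_perp {v : Fin 4 → kk} (hv : v ≠ 0) (k : Fin 4) : zf v k ⬝ᵥ v = 0 := by
  rw [zf_dot, piv_spec hv, mul_one, CharTwo.add_self_eq_zero]
theorem zf_piv {v : Fin 4 → kk} (hv : v ≠ 0) : zf v (piv v) = 0 := by
  rw [zf, piv_spec hv, one_smul, CharTwo.add_self_eq_zero]

theorem perp_exp (v γ : Fin 4 → kk) (h : γ ⬝ᵥ v = 0) : γ = ∑ k, γ k • zf v k := by
  simp only [zf, smul_add, Finset.sum_add_distrib, smul_smul, ← Finset.sum_smul]
  have : ∑ k, γ k * v k = 0 := h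
  rw [this, zero_smul, add_zero]
  ext i; simp [Finset.sum_apply, Pi.single_apply]

theorem eval_lf (α u : Fin 4 → kk) : eval u (lf α) = α ⬝ᵥ u := by
  simp [lf, dotProduct, smul_eval]

def dl (v : Fin 4 → kk) (d : ℕ) : P4 :=
  X (piv v) ^ (d - 3) * ∏ k ∈ Finset.univ.erase (piv v), lf (Pi.single k 1 + (1 + v k) • Pi.single (piv v) 1)

theorem dl_homog (v : Fin 4 → kk) {d : ℕ} (hd : 3 ≤ d) : dl v d ∈ homog d := by
  have h1 : (X (piv v) ^ (d - 3) : P4) ∈ homog (d - 3) := by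
    rw [homog, mem_homogeneousSubmodule]; simpa using (isHomogeneous_X kk (piv v)).pow (d-3)
  have h2 : ∏ k ∈ Finset.univ.erase (piv v), lf (Pi.single k 1 + (1 + v k) • Pi.single (piv v) 1) ∈ homog 3 := by
    have := IsHomogeneous.prod (Finset.univ.erase (piv v)) (fun k => lf (Pi.single k 1 + (1 + v k) • Pi.single (piv v) 1))
      (fun _ => 1) (fun i _ => lf_homog _)
    simp only [Finset.sum_const, Finset.card_erase_of_mem (Finset.mem_univ _)] at this
    rw [homog, mem_homogeneousSubmodule]; simpa using this
  have := homog_mul h1 h2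
  rwa [Nat.sub_add_cancel hd] at this

theorem dl_eval {v : Fin 4 → kk} (hv : v ≠ 0) {d : ℕ} (hd : 4 ≤ d) (u : Fin 4 → kk) :
    eval u (dl v d) = if u = v then 1 else 0 := by
  rw [dl, map_mul, map_pow, eval_X, map_prod]
  simp only [eval_lf, add_dotProduct, smul_dotProduct, single_dotProduct, one_mul, smul_eq_mul]
  split_ifs with h
  · subst h
    rw [piv_spec hv, one_pow, one_mul]
    apply Finset.prod_eq_one
    intro k _
    generalize u k = x
    revert x; decide
  · by_cases hp : u (piv v) = 1
    · obtain ⟨k, hk⟩ := Function.ne_iff.1 h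
      have hkp : k ≠ piv v := by
        rintro rfl
        rw [hp, piv_spec hv] at hk; exact hk rfl
      rw [Finset.prod_eq_zero (i := k) (by simp [hkp]), mul_zero]
      rw [hp]
      revert hk; generalize u k = x; generalize v k = y; revert x y; decide
    · have : u (piv v) = 0 := by revert hp; generalize u (piv v) = x; revert x; decide
      rw [this, zero_pow (by omega), zero_mul]

theorem dl_succ (v : Fin 4 → kk) {d : ℕ} (hd : 3 ≤ d) : dl v (d+1) = lf (yf v) * dl v d := by
  rw [dl, dl, yf, lf_single, show d + 1 - 3 = (d - 3) + 1 by omega, pow_succ']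
  ring

def W (r : ℕ) (v : Fin 4 → kk) : List (Fin 4) → P4
  | [] => dl v (2^(r+2) - 1)
  | k :: l => lf (yf v) * lf (zf v k) * (W r v l)^2

def nd (r : ℕ) : ℕ → ℕ
  | 0 => 2^(r+2) - 1
  | s+1 => 2 * nd r s + 2

theorem W_homog {r : ℕ} (hr : 3 ≤ r) (v : Fin 4 → kk) (l : List (Fin 4)) : W r v l ∈ homog (nd r l.length) := by
  induction l with
  | nil =>
    have h8 : 2^3 ≤ 2^(r+2) := Nat.pow_le_pow_right (by norm_num) (by omega)
    have h3 : 3 ≤ 2^(r+2) - 1 := by omega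
    exact dl_homog v h3
  | cons k l ih =>
    have := homog_mul (homog_mul (lf_homog (yf v)) (lf_homog (zf v k))) (homog_sq ih)
    rwa [show 1 + 1 + 2 * nd r l.length = nd r (k :: l).length by simp [nd]; omega] at this

theorem W_piv {r : ℕ} {v : Fin 4 → kk} (hv : v ≠ 0) {l : List (Fin 4)} (h : piv v ∈ l) : W r v l = 0 := by
  induction l with
  | nil => simp at h
  | cons k l ih =>
    rw [W]
    by_cases hk : k = piv v
    · rw [hk, zf_piv hv, lf_zero]; simp
    · have : piv v ∈ l := by
        rcases List.mem_cons.1 h with h | h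
        · exact absurd h.symm hk
        · exact h
      rw [ih this]; simp

theorem q_R0 {a b h : P4} (ha : Lin a) (hb : Lin b) (hh : q h = 0) : q (a * b * h^2) = 0 :=
  q_eq0.2 (R0 ha hb (q_eq0.1 hh))

theorem W_perp {r : ℕ} (hr : 3 ≤ r) {v : Fin 4 → kk} (hv : v ≠ 0) (l : List (Fin 4)) :
    ∀ α β : Fin 4 → kk, α ⬝ᵥ v = 0 → β ⬝ᵥ v = 0 → q (lf α * lf β * (W r v l)^2) = 0 := by
  induction l with
  | nil =>
    intro α β ha hb
    have h8 : 2^5 ≤ 2^(r+2) := Nat.pow_le_pow_right (by norm_num) (by omega)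
    have e := dl_succ v (d := 2^(r+2) - 2) (by omega)
    have en : 2^(r+2) - 2 + 1 = 2^(r+2) - 1 := by omega
    rw [en] at e
    have key : ∀ γ : Fin 4 → kk, γ ⬝ᵥ v = 0 → ∀ α β, q (lf α * lf β * (lf γ * dl v (2^(r+2)-2))^2) = 0 := by
      intro γ hγ α β
      refine J_mem hr α β ?_ ?_
      · have := homog_mul (lf_homog γ) (dl_homog v (d := 2^(r+2)-2) (by omega))
        rwa [add_comm, en] at this
      · intro u _
        rw [map_mul, dl_eval hv (by omega), eval_lf]
        split_ifs with h
        · rw [h, hγ, zero_mul]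
        · rw [mul_zero]
    have R := R1 (Lin_lf α) (Lin_lf β) (Lin_lf (yf v)) (dl v (2^(r+2)-2))
    rw [key α ha, key β hb, add_zero, add_zero, ← e] at R
    exact R
  | cons k l ih =>
    intro α β ha hb
    have R := R1 (Lin_lf α) (Lin_lf β) (Lin_lf (yf v)) (lf (zf v k) * (W r v l)^2)
    have h1 := q_R0 (Lin_lf α) (Lin_lf (yf v)) (ih β (zf v k) hb (zf_perp hv k))
    have h2 := q_R0 (Lin_lf β) (Lin_lf (yf v)) (ih α (zf v k) ha (zf_perp hv k))
    rw [mul_assoc (lf β)] at h1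
    rw [mul_assoc (lf α) (lf (zf v k))] at h2
    rw [h1, h2, add_zero, add_zero, ← mul_assoc] at R
    exact R

theorem W_lin {r : ℕ} (hr : 3 ≤ r) {v : Fin 4 → kk} (hv : v ≠ 0) (l : List (Fin 4)) (α β : Fin 4 → kk) :
    ∃ γ : Fin 4 → kk, q (lf α * lf β * (W r v l)^2) = ∑ k, γ k • q (W r v (k :: l)) := by
  set A := α ⬝ᵥ v with hA
  set B := β ⬝ᵥ v with hB
  have py : yf v ⬝ᵥ v = 1 := by rw [yf_dot, piv_spec hv]
  obtain ⟨α', hα⟩ : ∃ α', α = A • yf v + α' := ⟨α - A • yf v, by abel⟩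
  obtain ⟨β', hβ⟩ : ∃ β', β = B • yf v + β' := ⟨β - B • yf v, by abel⟩
  have ha : α' ⬝ᵥ v = 0 := by
    have : A = A + α' ⬝ᵥ v := by
      conv_lhs => rw [hA, hα]
      rw [add_dotProduct, smul_dotProduct, py]; simp
    simpa using this
  have hb : β' ⬝ᵥ v = 0 := by
    have : B = B + β' ⬝ᵥ v := by
      conv_lhs => rw [hB, hβ]
      rw [add_dotProduct, smul_dotProduct, py]; simp
    simpa using this
  refine ⟨A • β' + B • α', ?_⟩
  have hg : (A • β' + B • α') ⬝ᵥ v = 0 := by simp [add_dotProduct, smul_dotProduct, ha, hb]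
  have e1 : ∑ k, (A • β' + B • α') k • q (W r v (k :: l)) = q (lf (yf v) * lf (A • β' + B • α') * (W r v l)^2) := by
    conv_rhs => rw [perp_exp v _ hg]
    rw [lf_sum, Finset.mul_sum, Finset.sum_mul, map_sum]
    refine Finset.sum_congr rfl fun k _ => ?_
    rw [lf_smul, mul_smul_comm, smul_mul_assoc, map_smul]; rfl
  rw [e1]
  have e2 : lf α * lf β * (W r v l)^2 = (A * B) • ((lf (yf v))^2 * (W r v l)^2) + lf α' * lf β' * (W r v l)^2
      + lf (yf v) * lf (A • β' + B • α') * (W r v l)^2 := by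
    conv_lhs => rw [hα, hβ]
    simp only [lf_add, lf_smul, smul_eq_C_mul, C_mul]
    ring
  rw [e2, map_add, map_add, map_smul, q_sq (Lin_lf _), W_perp hr hv l α' β' ha hb]
  simp

theorem W_congr (r : ℕ) (v : Fin 4 → kk) {l l' : List (Fin 4)}
    (h1 : l.length = l'.length) (h2 : l.toFinset = l'.toFinset) : q (W r v l) = q (W r v l') := by
  have hy := Lin_lf (yf v)
  refine list_lemma (fun l => q (W r v l)) ?_ ?_ ?_ l l' h1 h2
  · intro i l l' h; exact q_congr2 hy (Lin_lf _) h
  · intro i j l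
    have R := R1 hy (Lin_lf (zf v i)) (Lin_lf (zf v j)) (lf (yf v) * (W r v l)^2)
    have h3 := q_R0 (Lin_lf (zf v i)) (Lin_lf (zf v j)) (q_sq hy (W r v l))
    rw [show lf (yf v) * (lf (yf v) * (W r v l)^2) = lf (yf v)^2 * (W r v l)^2 by ring, h3, add_zero, q_add0] at R
    simp only [W]
    convert R using 2 <;> ring
  · intro i j l
    have R := R1 hy (Lin_lf (zf v i)) (Lin_lf (zf v j)) (lf (yf v)^3 * lf (zf v i) * lf (zf v j) * (W r v l)^4)
    have h3 := q_R0 (Lin_lf (zf v i)) (Lin_lf (zf v j)) (q_R0 (Lin_lf (zf v i)) (Lin_lf (zf v j)) (q_sq hy (W r v l)))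
    rw [show lf (yf v) * (lf (yf v)^3 * lf (zf v i) * lf (zf v j) * (W r v l)^4)
      = lf (zf v i) * lf (zf v j) * (lf (yf v)^2 * (W r v l)^2)^2 by ring, h3, add_zero, q_add0] at R
    simp only [W]
    convert R using 2 <;> ring

/-! Spanning -/
def CQ (r s : ℕ) : Submodule kk (P4 ⧸ H) :=
  Submodule.span kk {x | ∃ v l, v ≠ 0 ∧ l.length = s ∧ x = q (W r v l)}

theorem CQ_W {r : ℕ} {v : Fin 4 → kk} (hv : v ≠ 0) (l : List (Fin 4)) : q (W r v l) ∈ CQ r l.length :=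
  Submodule.subset_span ⟨v, l, hv, rfl, rfl⟩

def CP (r s : ℕ) : Submodule kk P4 :=
  Submodule.span kk {x | ∃ v l, v ≠ 0 ∧ l.length = s ∧ x = W r v l}

theorem CQ_rep {r s : ℕ} {x : P4 ⧸ H} (hx : x ∈ CQ r s) : ∃ f ∈ CP r s, q f = x := by
  have : CQ r s = (CP r s).map q := by
    rw [CQ, CP, Submodule.map_span]
    congr 1
    ext x; constructor
    · rintro ⟨v, l, h1, h2, rfl⟩; exact ⟨_, ⟨v, l, h1, h2, rfl⟩, rfl⟩
    · rintro ⟨_, ⟨v, l, h1, h2, rfl⟩, rfl⟩; exact ⟨v, l, h1, h2, rfl⟩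
  rw [this] at hx; exact hx

theorem psi_W {r : ℕ} (hr : 3 ≤ r) {v : Fin 4 → kk} (hv : v ≠ 0) (l : List (Fin 4)) (α β : Fin 4 → kk) :
    psi (lf α) (lf β) (W r v l) ∈ CQ r (l.length + 1) := by
  obtain ⟨γ, h⟩ := W_lin hr hv l α β
  rw [psi_apply, h]
  exact Submodule.sum_mem _ fun k _ => Submodule.smul_mem _ _ (CQ_W hv (k :: l))

theorem psi_CQ {r s : ℕ} (hr : 3 ≤ r) {f : P4} (hf : q f ∈ CQ r s) (α β : Fin 4 → kk) :
    psi (lf α) (lf β) f ∈ CQ r (s + 1) := by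
  obtain ⟨f', h1, h2⟩ := CQ_rep hf
  rw [psi_congr (Lin_lf _) (Lin_lf _) h2.symm]
  have : CP r s ≤ (CQ r (s+1)).comap (psi (lf α) (lf β)) := by
    rw [CP, Submodule.span_le]
    rintro _ ⟨v, l, hv, rfl, rfl⟩
    exact psi_W hr hv l α β
  exact this h1

theorem par_even (c : Fin 4 → ℕ) (h : dg c % 2 = 0) :
    (∃ e, c = 2 • e) ∨ (∃ a b e, c = ee a + ee b + 2 • e) ∨ ∃ e, c = 1 + 2 • e := by
  have key : ∀ p : Fin 4 → Fin 2, (p 0 + p 1 + p 2 + p 3 = 0) →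
      (∀ i, (p i : ℕ) = 0) ∨ (∃ a b : Fin 4, ∀ i, (p i : ℕ) = ee a i + ee b i) ∨ (∀ i, (p i : ℕ) = 1) := by decide
  have := key (fun i => ⟨c i % 2, Nat.mod_lt _ two_pos⟩) (by
    apply Fin.ext
    simp [dg, Fin.sum_univ_four] at h
    simp [Fin.val_add]
    omega)
  rcases this with hk | ⟨a, b, hk⟩ | hk
  · refine Or.inl ⟨fun i => c i / 2, ?_⟩
    ext i; have := hk i; simp at this ⊢; omega
  · refine Or.inr (Or.inl ⟨a, b, fun i => c i / 2, ?_⟩)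
    ext i; have := hk i; simp at this ⊢; omega
  · refine Or.inr (Or.inr ⟨fun i => c i / 2, ?_⟩)
    ext i; have := hk i; simp at this ⊢; omega

theorem psi_lf_mem {S : Submodule kk (P4 ⧸ H)} {g : P4} (h : ∀ i j, psi (X i) (X j) g ∈ S) (α β : Fin 4 → kk) :
    psi (lf α) (lf β) g ∈ S := by
  rw [psi_apply, q_lf]
  exact Submodule.sum_mem _ fun i _ => Submodule.sum_mem _ fun j _ => Submodule.smul_mem _ _ (h i j)

theorem mon_one_four : ∀ i j : Fin 4, i ≠ j → ∃ k l, (1 : Fin 4 → ℕ) = ee i + ee j + ee k + ee l := by decide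

theorem span1 {r : ℕ} (hr : 3 ≤ r) : ∀ (s : ℕ) (α β : Fin 4 → kk) (g : P4), g ∈ homog (nd r s) →
    psi (lf α) (lf β) g ∈ CQ r (s+1) := by
  have h8 : 2^5 ≤ 2^(r+2) := Nat.pow_le_pow_right (by norm_num) (by omega)
  intro s
  induction s with
  | zero =>
    intro α β g hg
    classical
    set g' := g + ∑ v ∈ Finset.univ.filter (fun v : Fin 4 → kk => v ≠ 0), eval v g • W r v [] with hg'
    have h0 : psi (lf α) (lf β) g' = 0 := by
      refine J_mem hr α β ?_ ?_
      · exact add_mem hg (Submodule.sum_mem _ fun v _ => Submodule.smul_mem _ _ (W_homog hr v []))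
      · intro u hu
        rw [hg', map_add, map_sum, Finset.sum_eq_single u]
        · rw [smul_eval, W, dl_eval hu (by omega), if_pos rfl, mul_one, CharTwo.add_self_eq_zero]
        · intro v hv hvu
          rw [smul_eval, W, dl_eval (by simpa using hv) (by omega), if_neg hvu.symm, mul_zero]
        · intro h; simp [hu] at h
    rw [hg', map_add, q_add0, map_sum] at h0
    rw [h0]
    refine Submodule.sum_mem _ fun v hv => ?_
    rw [map_smul]
    exact Submodule.smul_mem _ _ (psi_W hr (by simpa using hv) [] α β)
  | succ s ih =>
    intro α β g hg
    rw [homog_span] at hg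
    have : Submodule.span kk {p | ∃ c, dg c = nd r (s+1) ∧ p = mon c} ≤
      (CQ r (s+1+1)).comap (psi (lf α) (lf β)) := by
      rw [Submodule.span_le]
      rintro _ ⟨c, hc, rfl⟩
      show psi (lf α) (lf β) (mon c) ∈ CQ r (s+1+1)
      have hnd : nd r (s+1) = 2 * nd r s + 2 := rfl
      rw [hnd] at hc
      rcases par_even c (by omega) with ⟨e, rfl⟩ | ⟨a, b, e, rfl⟩ | ⟨e, rfl⟩
      · obtain ⟨i, d, rfl⟩ := nz_ex (c := e) (by rw [dg_two] at hc; omega)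
        have : q (mon (2 • (ee i + d))) = 0 := by
          rw [mon_two, mon_add, mon_ee, mul_pow]; exact q_sq (Lin_X i) _
        rw [psi_apply, q_R0 (Lin_lf _) (Lin_lf _) this]
        exact zero_mem _
      · refine psi_CQ hr ?_ α β
        have := ih (Pi.single a 1) (Pi.single b 1) (mon e) (by
          simp only [dg_add, dg_ee, dg_two] at hc
          rw [show nd r s = dg e by omega]; exact mon_homog e)
        rw [psi_apply, lf_single, lf_single] at this
        rwa [mon_add, mon_add, mon_ee, mon_ee, mon_two]
      · refine psi_lf_mem ?_ α β
        intro i j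
        by_cases hij : i = j
        · subst hij
          rw [psi_apply, ← pow_two, q_sq (Lin_X i)]; exact zero_mem _
        obtain ⟨k, l, h1⟩ := mon_one_four i j hij
        have hd1 : dg 1 = 4 := by decide
        rw [dg_add, dg_two, hd1] at hc
        have R := R1 (Lin_X i) (Lin_X j) (Lin_X k) (X i * X j * X l * (mon e)^2)
        have key : ∀ x y i l j : Fin 4, q (X x * X y * (X i * X l * (X j * mon e)^2)^2) ∈ CQ r (s+1+1) := by
          intro x y i l j
          have := ih (Pi.single i 1) (Pi.single l 1) (X j * mon e) (by
            have := homog_mul (X_homog j) (mon_homog e)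
            rwa [show 1 + dg e = nd r s by omega] at this)
          have := psi_CQ hr (f := X i * X l * (X j * mon e)^2) (by
            rw [psi_apply, lf_single, lf_single] at this; exact this) (Pi.single x 1) (Pi.single y 1)
          rwa [psi_apply, lf_single, lf_single] at this
        rw [add_assoc, q_add0] at R
        have e1 : mon (1 + 2 • e) = X k * (X i * X j * X l * (mon e)^2) := by
          rw [h1]
          simp only [mon_add, mon_ee, mon_two]
          ring
        rw [psi_apply, e1, R]
        refine add_mem ?_ ?_
        · rw [show (X j * (X i * X j * X l * (mon e)^2) : P4) = X i * X l * (X j * mon e)^2 by ring]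
          exact key i k i l j
        · rw [show (X i * (X i * X j * X l * (mon e)^2) : P4) = X j * X l * (X i * mon e)^2 by ring]
          exact key j k j l i
    exact this hg


theorem choose_even : ∀ (a n p : ℕ), n + p + 1 = 2^a → 0 < p → (n.choose p) % 2 = 0 := by
  intro a
  induction a with
  | zero => intro n p h hp; omega
  | succ a ih =>
    intro n p h hp
    rw [pow_succ] at h
    have := Choose.choose_modEq_choose_mod_mul_choose_div_nat (n := n) (k := p) (p := 2)
    rw [Nat.ModEq] at this
    rw [this]
    rcases Nat.mod_two_eq_zero_or_one p with h0 | h1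
    · have hn : n % 2 = 1 := by omega
      rw [h0, Nat.mul_mod, ih (n/2) (p/2) (by omega) (by omega)]; simp
    · have hn : n % 2 = 0 := by omega
      rw [h1, hn]; simp

theorem sqT_pow (i : Fin 4) (n : ℕ) : (sqT (X i))^n = ∑ p ∈ Finset.range (n+1),
    Polynomial.monomial p ((X i : P4)^(n+p) * (n.choose p : P4)) := by
  rw [show sqT (X i) = Polynomial.X * Polynomial.C (X i ^ 2) + Polynomial.C (X i) by
    rw [add_comm]; exact Lin_X i, add_pow]
  refine Finset.sum_congr rfl fun p hp => ?_
  have hp : p ≤ n := by simpa [Nat.lt_succ_iff] using hp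
  rw [← Polynomial.C_mul_X_pow_eq_monomial, mul_pow, ← Polynomial.C_pow, ← Polynomial.C_pow]
  rw [show n + p = 2 * p + (n - p) by omega, pow_add, pow_mul]
  simp only [Polynomial.C_mul, map_natCast]
  ring

theorem coeff_mon (c : Fin 4 → ℕ) (S : Fin 4 →₀ ℕ) : coeff S (mon c) = if c = S then (1:kk) else 0 := by
  have : mon c = monomial (Finsupp.equivFunOnFinite.symm c) (1:kk) := by
    rw [mon_eq]; rfl
  rw [this, coeff_monomial]
  congr 1
  rw [eq_iff_iff]
  constructor
  · rintro rfl; rfl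
  · rintro rfl; ext; rfl

theorem monomial_prod (s : Finset (Fin 4)) (p : Fin 4 → ℕ) (f : Fin 4 → P4) :
    ∏ i ∈ s, Polynomial.monomial (p i) (f i) = Polynomial.monomial (∑ i ∈ s, p i) (∏ i ∈ s, f i) := by
  classical
  induction s using Finset.induction_on with
  | empty => simp
  | insert a s ha ih => rw [Finset.prod_insert ha, ih, Polynomial.monomial_mul_monomial, Finset.sum_insert ha, Finset.prod_insert ha]

theorem spike_mon (S : Fin 4 →₀ ℕ) (a : Fin 4 → ℕ) (hS : ∀ i, S i + 1 = 2^(a i)) (k : ℕ) (hk : 0 < k) (c : Fin 4 → ℕ) :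
    coeff S (Sq k (mon c)) = 0 := by
  rw [Sq_apply, mon, map_prod]
  simp only [map_pow, sqT_pow]
  rw [Finset.prod_univ_sum, Polynomial.finsetSum_coeff, coeff_sum]
  refine Finset.sum_eq_zero fun p hp => ?_
  rw [monomial_prod, Polynomial.coeff_monomial]
  split_ifs with hpk
  · rw [Finset.prod_mul_distrib, ← Nat.cast_prod, ← map_natCast C, mul_comm, coeff_C_mul]
    rw [show ∏ i, (X i : P4)^(c i + p i) = mon (c + p) from rfl, coeff_mon]
    split_ifs with h
    · obtain ⟨i, hi⟩ : ∃ i, 0 < p i := by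
        by_contra hcon
        push Not at hcon
        have : ∑ i, p i = 0 := Finset.sum_eq_zero fun i _ => by have := hcon i; omega
        omega
      have h2 := hS i
      rw [← h] at h2
      have := choose_even _ (c i) (p i) h2 hi
      rw [Nat.cast_prod, Finset.prod_eq_zero (Finset.mem_univ i), zero_mul]
      exact (ZMod.natCast_eq_zero_iff _ 2).2 (Nat.dvd_of_mod_eq_zero this)
    · simp
  · simp

theorem spike (S : Fin 4 →₀ ℕ) (a : Fin 4 → ℕ) (hS : ∀ i, S i + 1 = 2^(a i)) {f : P4} (hf : f ∈ H) :
    coeff S f = 0 := by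
  have hall : ∀ (k : ℕ), 0 < k → ∀ g : P4, coeff S (Sq k g) = 0 := by
    intro k hk g
    have hg : g ∈ Submodule.span kk (Set.range mon) := by
      have := (basisMonomials (Fin 4) kk).span_eq
      have h2 : g ∈ (⊤ : Submodule kk P4) := trivial
      rw [← this] at h2
      refine Submodule.span_mono ?_ h2
      rintro _ ⟨u, rfl⟩
      refine ⟨u, ?_⟩
      rw [coe_basisMonomials]; exact (mon_eq u).symm
    induction hg using Submodule.span_induction with
    | mem x hx => obtain ⟨c, rfl⟩ := hx; exact spike_mon S a hS k hk c
    | zero => simp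
    | add x y _ _ hx hy => rw [map_add, coeff_add, hx, hy, add_zero]
    | smul r x _ hx => rw [map_smul, coeff_smul, hx, smul_zero]
  have : H ≤ LinearMap.ker (lcoeff kk S) := by
    rw [H, Submodule.span_le]
    rintro _ ⟨k, g, hk, rfl⟩
    exact hall k hk g
  exact this hf


theorem substM_lf' (M : Matrix (Fin 4) (Fin 4) kk) (α : Fin 4 → kk) :
    substM M (lf α) = lf (Matrix.vecMul α M) := by
  rw [lf, map_sum]
  simp only [map_smul, substM_lf]
  simp only [← lf_smul]
  rw [← lf_sum]
  congr 1

theorem substM_mul (M G : Matrix (Fin 4) (Fin 4) kk) (f : P4) : substM M (substM G f) = substM (G * M) f := by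
  have : (substM M).comp (substM G) = substM (G * M) := by
    apply MvPolynomial.algHom_ext
    intro i
    rw [AlgHom.comp_apply, substM_lf, substM_lf', substM_lf]
    rfl
  rw [← this]; rfl

def Mv (v w : Fin 4 → kk) : Matrix (Fin 4) (Fin 4) kk := fun i j => if j = 0 then v i else if j = 1 then w i else 0

theorem Mv_mul (G : Matrix (Fin 4) (Fin 4) kk) (v w : Fin 4 → kk) : G * Mv v w = Mv (G.mulVec v) (G.mulVec w) := by
  ext i j
  simp only [Matrix.mul_apply, Mv, Matrix.mulVec, dotProduct]
  split_ifs <;> simp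

theorem substM_Mv (v w α : Fin 4 → kk) : substM (Mv v w) (lf α) = C (α ⬝ᵥ v) * X 0 + C (α ⬝ᵥ w) * X 1 := by
  rw [substM_lf', lf, Fin.sum_univ_four]
  simp only [Matrix.vecMul, dotProduct, Mv, smul_eq_C_mul]
  simp

def Sp (r s : ℕ) : Fin 4 →₀ ℕ := Finsupp.single 0 (2^(s+(r+2)) - 1) + Finsupp.single 1 (2^s - 1)

def phi (r s : ℕ) (v w : Fin 4 → kk) : P4 →ₗ[kk] kk := lcoeff kk (Sp r s) ∘ₗ (substM (Mv v w)).toLinearMap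

theorem phi_apply (r s : ℕ) (v w : Fin 4 → kk) (f : P4) : phi r s v w f = coeff (Sp r s) (substM (Mv v w) f) := rfl

theorem phi_H (r s : ℕ) (v w : Fin 4 → kk) {f : P4} (hf : f ∈ H) : phi r s v w f = 0 := by
  rw [phi_apply]
  refine spike (Sp r s) ![s+(r+2), s, 0, 0] ?_ (substM_H _ hf)
  have h1 : 0 < 2^(s+(r+2)) := by positivity
  have h2 : 0 < 2^s := by positivity
  intro i
  fin_cases i <;> simp [Sp] <;> omega

theorem coeff_sq (S : Fin 4 →₀ ℕ) (g : P4) : coeff (2 • S) (g^2) = coeff S g := by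
  rw [← expand_zmod, coeff_expand_smul _ two_ne_zero]

theorem coeff_sq_odd (S : Fin 4 →₀ ℕ) (i : Fin 4) (hi : S i % 2 = 1) (g : P4) : coeff S (g^2) = 0 := by
  rw [← expand_zmod]
  refine coeff_expand_of_not_dvd _ (i := i) ?_
  omega

theorem phi_succ (r s : ℕ) (v w α β : Fin 4 → kk) (h : P4) :
    phi r (s+1) v w (lf α * lf β * h^2) = ((α ⬝ᵥ v) * (β ⬝ᵥ w) + (α ⬝ᵥ w) * (β ⬝ᵥ v)) * phi r s v w h := by
  rw [phi_apply, map_mul, map_mul, map_pow, substM_Mv, substM_Mv, phi_apply]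
  generalize substM (Mv v w) h = g
  generalize α ⬝ᵥ v = a
  generalize α ⬝ᵥ w = b
  generalize β ⬝ᵥ v = a'
  generalize β ⬝ᵥ w = b'
  have e : (C a * X 0 + C b * X 1) * (C a' * X 0 + C b' * X 1) * g^2
    = C (a * a') * (X 0 * g)^2 + C (a * b' + b * a') * (g^2 * X 0 * X 1) + C (b * b') * (X 1 * g)^2 := by
    simp only [C_add, C_mul]; ring
  have h1 : 0 < 2^(s+(r+2)) := by positivity
  have h2 : 0 < 2^s := by positivity
  have h0 : Sp r (s+1) 0 % 2 = 1 := by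
    simp [Sp, show s + 1 + (r+2) = s + (r+2) + 1 by ring, pow_succ]; omega
  have hS : Sp r (s+1) = 2 • Sp r s + Finsupp.single 0 1 + Finsupp.single 1 1 := by
    ext i
    fin_cases i <;> simp [Sp, show s + 1 + (r+2) = s + (r+2) + 1 by ring, pow_succ] <;> omega
  rw [e, coeff_add, coeff_add, coeff_C_mul, coeff_C_mul, coeff_C_mul, coeff_sq_odd _ 0 h0, coeff_sq_odd _ 0 h0]
  rw [hS, coeff_mul_X, coeff_mul_X, coeff_sq]
  simp

theorem phi_zero (r : ℕ) (v w : Fin 4 → kk) {h : P4} (hh : h ∈ homog (nd r 0)) : phi r 0 v w h = eval v h := by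
  have key : ∀ g ∈ homog (nd r 0), coeff (Sp r 0) g = eval (Pi.single 0 1 : Fin 4 → kk) g := by
    intro g hg
    rw [homog_span] at hg
    induction hg using Submodule.span_induction with
    | mem x hx =>
      obtain ⟨c, hc, rfl⟩ := hx
      rw [coeff_mon]
      simp only [mon, map_prod, map_pow, eval_X, Fin.prod_univ_four]
      simp only [dg, Fin.sum_univ_four, nd] at hc
      have : (c = ⇑(Sp r 0)) ↔ (c 1 = 0 ∧ c 2 = 0 ∧ c 3 = 0) := by
        constructor
        · intro h; rw [h]; simp [Sp]
        · rintro ⟨h1, h2, h3⟩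
          ext i
          fin_cases i <;> simp [Sp, h1, h2, h3]; omega
      simp only [this]
      by_cases h1 : c 1 = 0 <;> by_cases h2 : c 2 = 0 <;> by_cases h3 : c 3 = 0 <;> simp [h1, h2, h3]
    | zero => simp
    | add x y _ _ hx hy => rw [map_add, coeff_add, hx, hy]
    | smul a x _ hx => rw [smul_eval, coeff_smul, hx, smul_eq_mul]
  rw [phi_apply, key _ (substM_homog _ hh)]
  have : (aeval (Pi.single 0 1 : Fin 4 → kk)).comp (substM (Mv v w)) = aeval v := by
    apply MvPolynomial.algHom_ext
    intro i
    rw [AlgHom.comp_apply, substM_lf, aeval_X]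
    have e := eval_lf (Mv v w i) (Pi.single 0 1)
    rw [← coe_aeval_eq_eval] at e
    refine Eq.trans e ?_
    simp [Mv]
  have := DFunLike.congr_fun this h
  simpa [AlgHom.comp_apply, coe_aeval_eq_eval] using this

theorem phi_W {r : ℕ} (hr : 3 ≤ r) {v : Fin 4 → kk} (hv : v ≠ 0) (v' w : Fin 4 → kk) (l : List (Fin 4)) :
    phi r l.length v' w (W r v l) = if v' = v then (l.map fun k => w k + v k * w (piv v)).prod else 0 := by
  have h8 : 2^5 ≤ 2^(r+2) := Nat.pow_le_pow_right (by norm_num) (by omega)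
  induction l with
  | nil =>
    rw [List.length_nil, phi_zero r v' w (W_homog hr v []), W, dl_eval hv (by omega)]
    simp
  | cons k l ih =>
    rw [List.length_cons, W, phi_succ, ih]
    split_ifs with h
    · subst h
      rw [zf_perp hv, yf_dot, piv_spec hv, zf_dot]; simp
    · simp

theorem phi_subst (r s : ℕ) (v w : Fin 4 → kk) (G : Matrix (Fin 4) (Fin 4) kk) (f : P4) :
    phi r s v w (substM G f) = phi r s (G.mulVec v) (G.mulVec w) f := by
  rw [phi_apply, phi_apply, substM_mul, Mv_mul]


def nz : Finset (Fin 4 → kk) := Finset.univ.filter fun v => v ≠ 0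
theorem mem_nz {v : Fin 4 → kk} : v ∈ nz ↔ v ≠ 0 := by simp [nz]
def TT (v : Fin 4 → kk) : Finset (Finset (Fin 4)) := (Finset.univ.erase (piv v)).powerset.erase ∅

theorem kk_cases (x : kk) : x = 0 ∨ x = 1 := by revert x; decide

theorem lprod (l : List (Fin 4)) (g : Fin 4 → kk) : (l.map g).prod = ∏ k ∈ l.toFinset, g k := by
  by_cases h : ∀ k ∈ l, g k = 1
  · rw [Finset.prod_eq_one (fun k hk => h k (by simpa using hk))]
    apply List.prod_eq_one
    simpa using h
  · push Not at h
    obtain ⟨k, hk, h1⟩ := h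
    have h0 : g k = 0 := by rcases kk_cases (g k) with h | h; exact h; exact absurd h h1
    rw [Finset.prod_eq_zero (i := k) (by simpa using hk) h0]
    exact List.prod_eq_zero (by simp only [List.mem_map]; exact ⟨k, hk, h0⟩)

theorem recon {r s : ℕ} (hr : 3 ≤ r) (hs : 1 ≤ s) {f : P4} (hf : f ∈ CP r s) :
    q f = ∑ v ∈ nz, ∑ T ∈ TT v, (∑ U ∈ T.powerset, phi r s v (ind U) f) • q (W r v (wl s T)) := by
  induction hf using Submodule.span_induction with
  | mem x hx =>
    obtain ⟨v, l, hv, rfl, rfl⟩ := hx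
    by_cases hp : piv v ∈ l
    · rw [W_piv hv hp]; simp
    have hL : l.toFinset ∈ TT v := by
      rw [TT, Finset.mem_erase, Finset.mem_powerset]
      constructor
      · intro h
        rw [List.toFinset_eq_empty_iff] at h
        simp [h] at hs
      · intro k hk
        have hk : k ∈ l := by simpa using hk
        simp only [Finset.mem_erase, Finset.mem_univ, and_true]
        rintro rfl; exact hp hk
    have e : ∀ T ∈ TT v, (∑ U ∈ T.powerset, phi r l.length v (ind U) (W r v l)) = if l.toFinset = T then 1 else 0 := by
      intro T hT
      rw [← mob]
      refine Finset.sum_congr rfl fun U hU => ?_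
      rw [phi_W hr hv, if_pos rfl, lprod]
      have hpU : piv v ∉ U := by
        intro h
        rw [TT, Finset.mem_erase, Finset.mem_powerset] at hT
        have := hT.2 (Finset.mem_powerset.1 hU h)
        simp at this
      simp only [ind, hpU, if_false, mul_zero, add_zero]
      rw [Finset.prod_ite_zero]
      simp [Finset.subset_iff]
    rw [Finset.sum_eq_single v, Finset.sum_eq_single l.toFinset]
    · rw [e _ hL, if_pos rfl, one_smul]
      have hsp := wl_spec (n := l.length) (S := l.toFinset)
        (Finset.nonempty_iff_ne_empty.2 (Finset.mem_erase.1 hL).1) (List.toFinset_card_le l)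
      exact W_congr r v hsp.1.symm hsp.2.symm
    · intro T hT hne
      rw [e _ hT, if_neg hne.symm, zero_smul]
    · intro h; exact absurd hL h
    · intro v' _ hv'
      refine Finset.sum_eq_zero fun T _ => ?_
      rw [Finset.sum_eq_zero, zero_smul]
      intro U _
      rw [phi_W hr hv, if_neg hv']
    · intro h; exact absurd (mem_nz.2 hv) h
  | zero => simp
  | add x y _ _ hx hy =>
    simp only [map_add, Finset.sum_add_distrib, add_smul]
    rw [hx, hy]
  | smul a x _ hx =>
    rw [map_smul, hx]
    simp only [map_smul, Finset.smul_sum, smul_smul, ← Finset.mul_sum, smul_eq_mul]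

theorem inj {r s : ℕ} (hr : 3 ≤ r) (hs : 1 ≤ s) {f : P4} (hf : f ∈ CP r s) (h : ∀ v w, phi r s v w f = 0) : f ∈ H := by
  rw [← q_eq0, recon hr hs hf]
  simp [h]

def Ind (v w : Fin 4 → kk) : Prop := v ≠ 0 ∧ w ≠ 0 ∧ v ≠ w

theorem phi_dep {r s : ℕ} (hr : 3 ≤ r) (hs : 1 ≤ s) {f : P4} (hf : f ∈ CP r s) {v w : Fin 4 → kk} (h : ¬ Ind v w) :
    phi r s v w f = 0 := by
  induction hf using Submodule.span_induction with
  | mem x hx =>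
    obtain ⟨u, l, hu, rfl, rfl⟩ := hx
    rw [phi_W hr hu]
    split_ifs with hvu
    · subst hvu
      match l, hs with
      | k :: l, _ =>
        rw [List.map_cons, List.prod_cons]
        by_cases hw : w = 0
        · subst hw; simp
        · have : v = w := by
            by_contra hne; exact h ⟨hu, hw, hne⟩
          subst this
          rw [piv_spec hu, mul_one, CharTwo.add_self_eq_zero, zero_mul]
    · rfl
  | zero => simp
  | add x y _ _ hx hy => rw [map_add, hx, hy, add_zero]
  | smul a x _ hx => rw [map_smul, hx, smul_zero]

def e0 : Fin 4 → kk := Pi.single 0 1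
def e1 : Fin 4 → kk := Pi.single 1 1

theorem e0_ne : e0 ≠ 0 := by decide
theorem piv_e0 : piv e0 = 0 := by
  have := piv_spec e0_ne
  revert this; generalize piv e0 = p; revert p; decide

theorem sum_small1 : ∀ k : Fin 4, ∑ w ∈ Finset.univ.filter (fun w : Fin 4 → kk => w 0 = 0 ∧ w ≠ 0), w k = 0 := by
  decide +kernel
theorem sum_small2 : ∀ k k' : Fin 4, ∑ w ∈ Finset.univ.filter (fun w : Fin 4 → kk => w 0 = 0 ∧ w ≠ 0), w k * w k' = 0 := by
  decide +kernel
theorem sum_card : (Finset.univ.filter (fun w : Fin 4 → kk => w 0 = 0 ∧ w ≠ 0)).card = 7 := by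
  decide +kernel
theorem sum_Ind : ∀ w : Fin 4 → kk, w 0 = 0 ∧ w ≠ 0 → e0 ≠ w := by
  rintro w ⟨h, _⟩ rfl; simp [e0] at h

theorem phi_small {r s : ℕ} (hr : 3 ≤ r) (hs : s = 1 ∨ s = 2) {f : P4} (hf : f ∈ CP r s) :
    ∑ w ∈ Finset.univ.filter (fun w : Fin 4 → kk => w 0 = 0 ∧ w ≠ 0), phi r s e0 w f = 0 := by
  induction hf using Submodule.span_induction with
  | mem x hx =>
    obtain ⟨v, l, hv, rfl, rfl⟩ := hx
    simp only [phi_W hr hv]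
    by_cases h : e0 = v
    · subst h
      simp only [if_true, piv_e0]
      match l, hs with
      | [k], _ =>
        refine Eq.trans ?_ (sum_small1 k)
        refine Finset.sum_congr rfl fun w hw => ?_
        rw [(Finset.mem_filter.1 hw).2.1]; simp
      | [k, k'], _ =>
        refine Eq.trans ?_ (sum_small2 k k')
        refine Finset.sum_congr rfl fun w hw => ?_
        rw [(Finset.mem_filter.1 hw).2.1]; simp
    · simp [h]
  | zero => simp
  | add x y _ _ hx hy => simp only [map_add, Finset.sum_add_distrib]; rw [hx, hy, add_zero]
  | smul a x _ hx => simp only [map_smul, ← Finset.smul_sum]; rw [hx, smul_zero]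

def F (r s : ℕ) : P4 := ∑ v ∈ nz, ∑ T ∈ TT v, W r v (wl s T)

theorem TT_spec {s : ℕ} (hs : 3 ≤ s) {v : Fin 4 → kk} {T : Finset (Fin 4)} (hT : T ∈ TT v) :
    (wl s T).length = s ∧ (wl s T).toFinset = T := by
  rw [TT, Finset.mem_erase, Finset.mem_powerset] at hT
  refine wl_spec (Finset.nonempty_iff_ne_empty.2 hT.1) ?_
  have := Finset.card_le_card hT.2
  rw [Finset.card_erase_of_mem (Finset.mem_univ _)] at this
  simp at this; omega

theorem F_mem {r s : ℕ} (hs : 3 ≤ s) : F r s ∈ CP r s :=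
  Submodule.sum_mem _ fun v hv => Submodule.sum_mem _ fun T hT =>
    Submodule.subset_span ⟨v, wl s T, mem_nz.1 hv, (TT_spec hs hT).1, rfl⟩

open scoped Classical in
theorem phi_F {r s : ℕ} (hr : 3 ≤ r) (hs : 3 ≤ s) (v w : Fin 4 → kk) : phi r s v w (F r s) = if Ind v w then 1 else 0 := by
  split_ifs with h
  · rw [F, map_sum, Finset.sum_eq_single v]
    · rw [map_sum]
      have e : ∀ T ∈ TT v, phi r s v w (W r v (wl s T)) = ∏ k ∈ T, (w k + v k * w (piv v)) := by
        intro T hT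
        have := phi_W hr h.1 v w (wl s T)
        rw [(TT_spec hs hT).1, if_pos rfl, lprod, (TT_spec hs hT).2] at this
        exact this
      rw [Finset.sum_congr rfl e]
      have e2 := Finset.prod_one_add (s := Finset.univ.erase (piv v)) (f := fun k => w k + v k * w (piv v))
      rw [← Finset.add_sum_erase _ _ (Finset.empty_mem_powerset _)] at e2
      rw [Finset.prod_empty] at e2
      have e3 : ∏ k ∈ Finset.univ.erase (piv v), (1 + (w k + v k * w (piv v))) = 0 := by
        obtain ⟨k, hk⟩ : ∃ k, w k + v k * w (piv v) ≠ 0 := by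
          by_contra hcon
          push Not at hcon
          rcases kk_cases (w (piv v)) with h0 | h1
          · apply h.2.1; ext k; have := hcon k; rw [h0, mul_zero, add_zero] at this; exact this
          · apply h.2.2; ext k; have := hcon k; rw [h1, mul_one, CharTwo.add_eq_zero] at this; exact this.symm
        have hkp : k ≠ piv v := by
          rintro rfl
          rw [piv_spec h.1, one_mul, CharTwo.add_self_eq_zero] at hk; exact hk rfl
        rw [Finset.prod_eq_zero (i := k) (by simp [hkp])]
        rcases kk_cases (w k + v k * w (piv v)) with h | h
        · exact absurd h hk
        · rw [h]; rfl
      rw [e3] at e2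
      exact (CharTwo.add_eq_zero.1 e2.symm).symm
    · intro v' hv' hne
      rw [map_sum]
      refine Finset.sum_eq_zero fun T hT => ?_
      have := phi_W hr (mem_nz.1 hv') v w (wl s T)
      rw [(TT_spec hs hT).1, if_neg hne.symm] at this
      exact this
    · intro hn; exact absurd (mem_nz.2 h.1) hn
  · exact phi_dep hr (by omega) (F_mem hs) h

theorem CP_subst {r s : ℕ} (hr : 3 ≤ r) (G : Matrix (Fin 4) (Fin 4) kk) {f : P4} (hf : f ∈ CP r (s+1)) :
    q (substM G f) ∈ CQ r (s+1) := by
  have : CP r (s+1) ≤ (CQ r (s+1)).comap (q ∘ₗ (substM G).toLinearMap) := by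
    rw [CP, Submodule.span_le]
    rintro _ ⟨v, l, hv, hl, rfl⟩
    match l, hl with
    | k :: l, hl =>
      show q (substM G (W r v (k :: l))) ∈ CQ r (s+1)
      rw [W, map_mul (substM G), map_mul (substM G), map_pow (substM G), substM_lf', substM_lf']
      refine span1 hr s _ _ _ (substM_homog _ ?_)
      have := W_homog hr v l
      rwa [show l.length = s by simpa using hl] at this
  exact this hf

theorem CP_homog {r s : ℕ} (hr : 3 ≤ r) {f : P4} (hf : f ∈ CP r s) : f ∈ homog (nd r s) := by
  have : CP r s ≤ homog (nd r s) := by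
    rw [CP, Submodule.span_le]
    rintro _ ⟨v, l, hv, rfl, rfl⟩
    exact W_homog hr v l
  exact this hf

theorem ex_minor : ∀ v w : Fin 4 → kk, v ≠ 0 ∧ w ≠ 0 ∧ v ≠ w → ∃ p q : Fin 4, p < q ∧ v p * w q + v q * w p = 1 := by
  decide +kernel

def GG (v w a b : Fin 4 → kk) : Matrix (Fin 4) (Fin 4) kk := fun i => ![v i, w i, a i, b i]

theorem ex_G {v w : Fin 4 → kk} (h : Ind v w) : ∃ G ∈ glSet, G.mulVec e0 = v ∧ G.mulVec e1 = w := by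
  have key : ∃ a b, (GG v w a b).det = 1 := by
    obtain ⟨p, q, hpq, hd⟩ := ex_minor v w h
    have h1 : (-1 : kk) = 1 := by decide
    fin_cases p <;> fin_cases q <;> first | (exfalso; revert hpq; decide) | skip
    · refine ⟨Pi.single 2 1, Pi.single 3 1, ?_⟩
      have hd' : v 0 * w 1 + v 1 * w 0 = 1 := hd
      simp [GG, Matrix.det_succ_row_zero, Fin.sum_univ_succ, Fin.succAbove, h1]
      linear_combination hd'
    · refine ⟨Pi.single 1 1, Pi.single 3 1, ?_⟩
      have hd' : v 0 * w 2 + v 2 * w 0 = 1 := hd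
      simp [GG, Matrix.det_succ_row_zero, Fin.sum_univ_succ, Fin.succAbove, h1]
      linear_combination hd'
    · refine ⟨Pi.single 1 1, Pi.single 2 1, ?_⟩
      have hd' : v 0 * w 3 + v 3 * w 0 = 1 := hd
      simp [GG, Matrix.det_succ_row_zero, Fin.sum_univ_succ, Fin.succAbove, h1]
      linear_combination hd'
    · refine ⟨Pi.single 0 1, Pi.single 3 1, ?_⟩
      have hd' : v 1 * w 2 + v 2 * w 1 = 1 := hd
      simp [GG, Matrix.det_succ_row_zero, Fin.sum_univ_succ, Fin.succAbove, h1]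
      linear_combination hd'
    · refine ⟨Pi.single 0 1, Pi.single 2 1, ?_⟩
      have hd' : v 1 * w 3 + v 3 * w 1 = 1 := hd
      simp [GG, Matrix.det_succ_row_zero, Fin.sum_univ_succ, Fin.succAbove, h1]
      linear_combination hd'
    · refine ⟨Pi.single 0 1, Pi.single 1 1, ?_⟩
      have hd' : v 2 * w 3 + v 3 * w 2 = 1 := hd
      simp [GG, Matrix.det_succ_row_zero, Fin.sum_univ_succ, Fin.succAbove, h1]
      linear_combination hd'
  obtain ⟨a, b, hab⟩ := key
  refine ⟨GG v w a b, ?_, ?_, ?_⟩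
  · show IsUnit _
    rw [Matrix.isUnit_iff_isUnit_det, hab]; exact isUnit_one
  · ext i; simp [e0, GG]
  · ext i; simp [e1, GG]


open scoped Classical in
theorem kameko_mon (c : Fin 4 → ℕ) : kameko (mon c) = if ∀ i, c i % 2 = 1 then mon (fun i => (c i - 1)/2) else 0 := by
  have h := (basisMonomials (Fin 4) kk).constr_basis kk (fun d : Fin 4 →₀ ℕ =>
    if ∀ i, d i % 2 = 1 then (monomial (halfExp d) 1 : P4) else 0) (Finsupp.equivFunOnFinite.symm c)
  rw [coe_basisMonomials] at h
  have e : mon c = monomial (Finsupp.equivFunOnFinite.symm c) (1:kk) := by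
    rw [mon_eq]; rfl
  rw [e, kameko]
  refine h.trans ?_
  congr 1
  rw [mon_eq]
  rfl

theorem kameko_even (e : Fin 4 → ℕ) : kameko (mon (2 • e)) = 0 := by
  rw [kameko_mon, if_neg]
  intro h; have := h 0; simp at this
theorem kameko_two (a b : Fin 4) (e : Fin 4 → ℕ) : kameko (mon (ee a + ee b + 2 • e)) = 0 := by
  rw [kameko_mon, if_neg]
  intro h
  have : ∀ a b : Fin 4, ∃ i, (ee a i + ee b i) % 2 = 0 := by decide
  obtain ⟨i, hi⟩ := this a b
  have := h i; simp at this; omega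
theorem kameko_odd (e : Fin 4 → ℕ) : kameko (mon (1 + 2 • e)) = mon e := by
  rw [kameko_mon, if_pos]
  · congr 1; ext i; simp
  · intro i; simp

theorem kameko_homog {m : ℕ} {f : P4} (hf : f ∈ homog (2*m+4)) : kameko f ∈ homog m := by
  rw [homog_span] at hf
  have : Submodule.span kk {p | ∃ c, dg c = 2*m+4 ∧ p = mon c} ≤ (homog m).comap kameko := by
    rw [Submodule.span_le]
    rintro _ ⟨c, hc, rfl⟩
    show kameko (mon c) ∈ homog m
    rcases par_even c (by omega) with ⟨e, rfl⟩ | ⟨a, b, e, rfl⟩ | ⟨e, rfl⟩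
    · rw [kameko_even]; exact zero_mem _
    · rw [kameko_two]; exact zero_mem _
    · rw [kameko_odd]
      have hd1 : dg 1 = 4 := by decide
      rw [dg_add, dg_two, hd1] at hc
      rw [show m = dg e by omega]; exact mon_homog e
  exact this hf

theorem kameko_lf (α β : Fin 4 → kk) (g : P4) : kameko (lf α * lf β * g^2) = 0 := by
  have key : ∀ i j : Fin 4, ∀ g : P4, kameko (X i * X j * g^2) = 0 := by
    intro i j g
    have hg : g ∈ Submodule.span kk (Set.range mon) := by
      have := (basisMonomials (Fin 4) kk).span_eq
      have h2 : g ∈ (⊤ : Submodule kk P4) := trivial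
      rw [← this] at h2
      refine Submodule.span_mono ?_ h2
      rintro _ ⟨u, rfl⟩
      refine ⟨u, ?_⟩
      rw [coe_basisMonomials]; exact (mon_eq u).symm
    induction hg using Submodule.span_induction with
    | mem x hx =>
      obtain ⟨c, rfl⟩ := hx
      have := kameko_two i j c
      rwa [mon_add, mon_add, mon_ee, mon_ee, mon_two] at this
    | zero => simp
    | add x y _ _ hx hy =>
      rw [show (X i * X j * (x + y)^2 : P4) = X i * X j * x^2 + X i * X j * y^2 by
        linear_combination (X i * X j * x * y : P4) * two0, map_add, hx, hy, add_zero]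
    | smul a x _ hx =>
      rw [show (X i * X j * (a • x)^2 : P4) = (a^2) • (X i * X j * x^2) by
        simp only [smul_eq_C_mul, C_pow]; ring, map_smul, hx, smul_zero]
  have e : lf α * lf β * g^2 = ∑ i, ∑ j, (α i * β j) • (X i * X j * g^2) := by
    rw [lf, lf, Finset.sum_mul_sum, Finset.sum_mul]
    refine Finset.sum_congr rfl fun i _ => ?_
    rw [Finset.sum_mul]
    refine Finset.sum_congr rfl fun j _ => ?_
    simp only [smul_eq_C_mul, C_mul]; ring
  rw [e, map_sum]
  refine Finset.sum_eq_zero fun i _ => ?_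
  rw [map_sum]
  refine Finset.sum_eq_zero fun j _ => ?_
  rw [map_smul, key, smul_zero]

theorem CP_kameko {r s : ℕ} {f : P4} (hf : f ∈ CP r (s+1)) : kameko f = 0 := by
  have : CP r (s+1) ≤ LinearMap.ker kameko := by
    rw [CP, Submodule.span_le]
    rintro _ ⟨v, l, hv, hl, rfl⟩
    match l, hl with
    | k :: l, hl => exact kameko_lf _ _ _
  exact this hf

theorem X_lf (i : Fin 4) : (X i : P4) = lf (Pi.single i 1) := (lf_single i).symm

theorem span1X {r : ℕ} (hr : 3 ≤ r) (s : ℕ) (i j : Fin 4) {g : P4} (hg : g ∈ homog (nd r s)) :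
    q (X i * X j * g^2) ∈ CQ r (s+1) := by
  have := span1 hr s (Pi.single i 1) (Pi.single j 1) g hg
  rwa [psi_apply, lf_single, lf_single] at this

theorem red1 {r s m : ℕ} (hr : 3 ≤ r) (hm : m + 1 = nd r s) {f : P4} (hf : f ∈ homog (2*m+4)) :
    q f - psi (X 0 * X 1) (X 2 * X 3) (kameko f) ∈ CQ r (s+1) := by
  rw [homog_span] at hf
  induction hf using Submodule.span_induction with
  | mem x hx =>
    obtain ⟨c, hc, rfl⟩ := hx
    rcases par_even c (by omega) with ⟨e, rfl⟩ | ⟨a, b, e, rfl⟩ | ⟨e, rfl⟩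
    · obtain ⟨i, d, rfl⟩ := nz_ex (c := e) (by rw [dg_two] at hc; omega)
      have : q (mon (2 • (ee i + d))) = 0 := by
        rw [mon_two, mon_add, mon_ee, mul_pow]; exact q_sq (Lin_X i) _
      rw [this, kameko_even, map_zero, sub_zero]; exact zero_mem _
    · rw [kameko_two, map_zero, sub_zero, mon_add, mon_add, mon_ee, mon_ee, mon_two]
      simp only [dg_add, dg_ee, dg_two] at hc
      refine span1X hr s a b ?_
      rw [← hm, show m + 1 = dg e by omega]; exact mon_homog e
    · rw [kameko_odd, psi_apply, mon_add, mon_two]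
      have : mon 1 = X 0 * X 1 * (X 2 * X 3) := by
        simp [mon, Fin.prod_univ_four]; ring
      rw [this, sub_self]; exact zero_mem _
  | zero => simp
  | add x y _ _ hx hy =>
    rw [map_add, map_add, map_add, add_sub_add_comm]
    exact add_mem hx hy
  | smul a x _ hx =>
    rw [map_smul, map_smul, map_smul, ← smul_sub]
    exact Submodule.smul_mem _ _ hx

theorem red2 {r s m : ℕ} (hr : 3 ≤ r) (hm : m + 1 = nd r s) {u : P4} (hu : u ∈ hitSub m) :
    psi (X 0 * X 1) (X 2 * X 3) u ∈ CQ r (s+1) := by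
  have : hitSub m ≤ (CQ r (s+1)).comap (psi (X 0 * X 1) (X 2 * X 3)) := by
    rw [hitSub, Submodule.span_le]
    rintro _ ⟨d, hd, g, hg, rfl⟩
    obtain ⟨k, rfl⟩ : ∃ k, m = d + (k+1) := ⟨m - d - 1, by omega⟩
    rw [comp_sqTotal (k+1) hg]
    show psi (X 0 * X 1) (X 2 * X 3) (Sq (k+1) g) ∈ CQ r (s+1)
    rw [psi_apply, ← mul_assoc, S4 (Lin_X 0) (Lin_X 1) (Lin_X 2) (Lin_X 3)]
    have key : ∀ a b c e : Fin 4, q (X a * X b * (X c * X e * Sq k g)^2) ∈ CQ r (s+1) := by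
      intro a b c e
      refine span1X hr s a b ?_
      have := homog_mul (homog_mul (X_homog c) (X_homog e)) (Sq_homog k hg)
      rwa [show 1 + 1 + (d + k) = nd r s by omega] at this
    exact add_mem (add_mem (add_mem (add_mem (add_mem (key _ _ _ _) (key _ _ _ _)) (key _ _ _ _)) (key _ _ _ _)) (key _ _ _ _)) (key _ _ _ _)
  exact this hu

theorem Qmk_eq0 {n : ℕ} {f : P4} (hf : f ∈ homog n) : Qmk n f = 0 ↔ f ∈ H := by
  have e : homogeneousComponent n f = f := by
    rw [homogeneousComponent_of_mem hf, if_pos rfl]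
  rw [Qmk, LinearMap.comp_apply, Submodule.mkQ_apply, Submodule.Quotient.mk_eq_zero, Submodule.mem_comap]
  show homogeneousComponent n f ∈ hitSub n ↔ _
  rw [e, mem_hitSub hf]

theorem mem_ker {m : ℕ} {c : Qn (2*m+4)} {r s : ℕ} (hr : 3 ≤ r) (hm : m + 1 = nd r s) (hc : c ∈ kamekoKer m) :
    ∃ a ∈ CP r (s+1), Qmk (2*m+4) a = c := by
  obtain ⟨f, ⟨hf, hk⟩, rfl⟩ := hc
  have hk : Qmk m (kameko f) = 0 := hk
  rw [Qmk_eq0 (kameko_homog hf), ← mem_hitSub (kameko_homog hf)] at hk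
  have := add_mem (red1 hr hm hf) (red2 hr hm hk)
  rw [sub_add_cancel] at this
  obtain ⟨a, ha, h⟩ := CQ_rep this
  refine ⟨a, ha, ?_⟩
  have hah := CP_homog hr ha
  rw [nd, ← hm, show 2 * (m+1) + 2 = 2*m+4 by ring] at hah
  rw [← sub_eq_zero, ← map_sub, Qmk_eq0 (sub_mem hah hf)]
  exact q_eq.1 h

theorem CP_ker {m r s : ℕ} (hr : 3 ≤ r) (hm : m + 1 = nd r s) {a : P4} (ha : a ∈ CP r (s+1)) : Qmk (2*m+4) a ∈ kamekoKer m := by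
  have hah := CP_homog hr ha
  rw [nd, ← hm, show 2 * (m+1) + 2 = 2*m+4 by ring] at hah
  refine ⟨a, ⟨hah, ?_⟩, rfl⟩
  show Qmk m (kameko a) = 0
  rw [CP_kameko ha, map_zero]

theorem mem_inv {n : ℕ} {f : P4} (hf : f ∈ homog n) : Qmk n f ∈ QInv n glSet ↔ ∀ G ∈ glSet, substM G f - f ∈ H := by
  have key : ∀ g ∈ homog n, g ∈ invPre n glSet ↔ ∀ G ∈ glSet, substM G g - g ∈ H := by
    intro g hg
    rw [invPre, Submodule.mem_inf]
    simp only [Submodule.mem_iInf, Submodule.mem_comap, LinearMap.sub_apply, LinearMap.id_apply, AlgHom.toLinearMap_apply]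
    constructor
    · rintro ⟨_, h⟩ G hG; exact hitSub_le n (h G hG)
    · intro h
      refine ⟨hg, fun G hG => ?_⟩
      rw [mem_hitSub (sub_mem (substM_homog G hg) hg)]; exact h G hG
  constructor
  · rintro ⟨g, hg, h⟩ G hG
    have hgh : g ∈ homog n := (Submodule.mem_inf.1 hg).1
    have h1 := (key g hgh).1 hg G hG
    rw [← sub_eq_zero, ← map_sub, Qmk_eq0 (sub_mem hgh hf)] at h
    have h2 := substM_H G h
    have := sub_mem h1 (sub_mem h2 h)
    rw [map_sub] at this
    convert this using 1; ring
  · intro h; exact ⟨f, (key f hf).2 h, rfl⟩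

open scoped Classical in
theorem inv_phi {r s : ℕ} (hr : 3 ≤ r) {a : P4} (ha : a ∈ CP r (s+1)) (h : ∀ G ∈ glSet, substM G a - a ∈ H) :
    ∃ κ : kk, ∀ v w, phi r (s+1) v w a = if Ind v w then κ else 0 := by
  refine ⟨phi r (s+1) e0 e1 a, fun v w => ?_⟩
  split_ifs with hi
  · obtain ⟨G, hG, h1, h2⟩ := ex_G hi
    have := phi_H r (s+1) e0 e1 (h G hG)
    rw [map_sub, phi_subst, h1, h2, sub_eq_zero] at this
    exact this
  · exact phi_dep hr (by omega) ha hi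

theorem F_inv {r s : ℕ} (hr : 3 ≤ r) (hs : 3 ≤ s + 1) : ∀ G ∈ glSet, substM G (F r (s+1)) - F r (s+1) ∈ H := by
  classical
  intro G hG
  obtain ⟨b, hb, h⟩ := CQ_rep (CP_subst hr G (F_mem (r := r) hs))
  have h1 : b - substM G (F r (s+1)) ∈ H := q_eq.1 h
  have h2 : b - F r (s+1) ∈ H := by
    refine inj hr (by omega) (sub_mem hb (F_mem hs)) ?_
    intro v w
    have e := phi_H r (s+1) v w h1
    rw [map_sub, sub_eq_zero] at e
    rw [map_sub, e, phi_subst, phi_F hr hs, phi_F hr hs, sub_eq_zero]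
    have hinj : Function.Injective G.mulVec := Matrix.mulVec_injective_iff_isUnit.2 hG
    congr 1
    rw [Ind, Ind, hinj.ne_iff, ← hinj.ne_iff (x := v) (y := 0), ← hinj.ne_iff (x := w) (y := 0), Matrix.mulVec_zero]
  have := sub_mem h2 h1
  convert this using 1; ring

theorem nd_eq (r s : ℕ) : nd r s = 2 * (2^s - 1) + 2^s * (2^(r+2) - 1) := by
  induction s with
  | zero => simp [nd]
  | succ s ih =>
    have e : 2^(s+1) = 2 * 2^s := pow_succ' 2 s
    rw [nd, ih, e, mul_assoc 2]
    have : 0 < 2^s := by positivity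
    omega

theorem main_thm {r s m : ℕ} (hr : 3 ≤ r) (hm : m + 1 = nd r s) :
    (s + 1 = 1 ∨ s + 1 = 2 → kamekoKer m ⊓ QInv (2 * m + 4) glSet = ⊥) ∧
    (3 ≤ s + 1 → Module.finrank kk ↥(kamekoKer m ⊓ QInv (2 * m + 4) glSet) = 1) := by
  classical
  have hh : ∀ a ∈ CP r (s+1), a ∈ homog (2*m+4) := by
    intro a ha
    have hah := CP_homog hr ha
    rwa [nd, ← hm, show 2 * (m+1) + 2 = 2*m+4 by ring] at hah
  constructor
  · intro hs
    rw [eq_bot_iff]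
    rintro c ⟨hk, hi⟩
    obtain ⟨a, ha, rfl⟩ := mem_ker hr hm hk
    obtain ⟨κ, hκ⟩ := inv_phi hr ha ((mem_inv (hh a ha)).1 hi)
    have hsum := phi_small hr hs ha
    have : ∀ w ∈ Finset.univ.filter (fun w : Fin 4 → kk => w 0 = 0 ∧ w ≠ 0), phi r (s+1) e0 w a = κ := by
      intro w hw
      have hw := (Finset.mem_filter.1 hw).2
      rw [hκ, if_pos ⟨e0_ne, hw.2, sum_Ind w hw⟩]
    rw [Finset.sum_congr rfl this, Finset.sum_const, sum_card] at hsum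
    have h0 : κ = 0 := by clear this hκ; revert hsum; revert κ; decide
    rw [Submodule.mem_bot, Qmk_eq0 (hh a ha)]
    refine inj hr (by omega) ha ?_
    intro v w; rw [hκ, h0]; simp
  · intro hs
    have hF := F_mem (r := r) hs
    have key : kamekoKer m ⊓ QInv (2 * m + 4) glSet = Submodule.span kk {Qmk (2*m+4) (F r (s+1))} := by
      apply le_antisymm
      · rintro c ⟨hk, hi⟩
        obtain ⟨a, ha, rfl⟩ := mem_ker hr hm hk
        obtain ⟨κ, hκ⟩ := inv_phi hr ha ((mem_inv (hh a ha)).1 hi)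
        rw [Submodule.mem_span_singleton]
        refine ⟨κ, ?_⟩
        rw [← map_smul, ← sub_eq_zero, ← map_sub]
        have hd : κ • F r (s+1) - a ∈ CP r (s+1) := sub_mem (Submodule.smul_mem _ _ hF) ha
        rw [Qmk_eq0 (hh _ hd)]
        refine inj hr (by omega) hd ?_
        intro v w
        rw [map_sub, map_smul, phi_F hr hs, hκ]
        split_ifs <;> simp
      · rw [Submodule.span_singleton_le_iff_mem]
        exact ⟨CP_ker hr hm hF, (mem_inv (hh _ hF)).2 (F_inv hr hs)⟩
    rw [key]
    apply finrank_span_singleton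
    rw [Ne, Qmk_eq0 (hh _ hF)]
    intro hcon
    have := phi_H r (s+1) e0 e1 hcon
    rw [phi_F hr hs, if_pos ⟨e0_ne, by decide, by decide⟩] at this
    exact one_ne_zero this

/-- For `s ≥ 1`, `t ≥ 5` and `n = 2(2^s-1) + 2^s(2^t-1) = 2^{s+t} + 2^s - 2 = 2m + 4`
(so the Kameko map is `Sq^0 : Q_n → Q_{(n-4)/2} = Q_{2^{s+t-1} + 2^{s-1} - 3}`), the subspace
of `GL_4(F_2)`-invariant elements of the kernel of the Kameko surjection is trivial if
`s ∈ {1,2}` and one-dimensional if `s ≥ 3`. -/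
theorem statement_6 (s t m : ℕ) (hs : 1 ≤ s) (ht : 5 ≤ t)
    (hm : 2 * m + 4 = 2 * (2 ^ s - 1) + 2 ^ s * (2 ^ t - 1)) :
    (s = 1 ∨ s = 2 → kamekoKer m ⊓ QInv (2 * m + 4) glSet = ⊥) ∧
    (3 ≤ s → Module.finrank kk ↥(kamekoKer m ⊓ QInv (2 * m + 4) glSet) = 1) := by
  obtain ⟨r, rfl⟩ : ∃ r, t = r + 2 := ⟨t - 2, by omega⟩
  obtain ⟨s, rfl⟩ : ∃ s', s = s' + 1 := ⟨s - 1, by omega⟩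
  rw [← nd_eq, nd] at hm
  exact main_thm (r := r) (by omega) (by omega)

end
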